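/- Let K be a normal Hopf subalgebra of H (i.e., K is stable under the left and right adjoint actions of H on itself). Then (K, K) is a Mackey pair of Hopf subalgebras of H. -/

import Mathlib

open TensorProduct

namespace MackeyPaper

noncomputable section

universe v

variable (k : Type) [Field k] [CharZero k] [IsAlgClosed k]
variable (H : Type) [Ring H] [HopfAlgebra k H]

/-- A subcoalgebra of `H`: a `k`-subspace `C` with `Δ(C) ⊆ C ⊗ C`. -/
def IsSubcoalgebra (C : Submodule k H) : Prop :=
  ∀ c ∈ C, Coalgebra.comul (R := k) c ∈
    LinearMap.range (TensorProduct.map C.subtype C.subtype)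

/-- A simple (nonzero, minimal) subcoalgebra of `H`. -/
def IsSimpleSubcoalgebra (C : Submodule k H) : Prop :=
  IsSubcoalgebra k H C ∧ C ≠ ⊥ ∧
    ∀ D : Submodule k H, D ≤ C → IsSubcoalgebra k H D → D ≠ ⊥ → D = C

/-- A Hopf subalgebra of `H`: a subalgebra which is a subcoalgebra and is
stable under the antipode. -/
def IsHopfSubalgebra (K : Subalgebra k H) : Prop :=
  IsSubcoalgebra k H K.toSubmodule ∧ ∀ x ∈ K, HopfAlgebra.antipode (R := k) x ∈ K

/-- `Λ` is the (two-sided) idempotent integral of the Hopf subalgebra `K`,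
i.e. the integral normalized by `ε(Λ) = 1`. -/
def IsIdempotentIntegral (K : Subalgebra k H) (Λ : H) : Prop :=
  Λ ∈ K ∧ Coalgebra.counit (R := k) Λ = 1 ∧
    ∀ x ∈ K, x * Λ = Coalgebra.counit (R := k) x • Λ ∧
      Λ * x = Coalgebra.counit (R := k) x • Λ

/-- A cocommutative element of `H`; the cocommutative elements of `H` form
the character ring `C(H^*)`. -/
def IsCocomm (x : H) : Prop :=
  (TensorProduct.comm k H H) (Coalgebra.comul (R := k) x) = Coalgebra.comul (R := k) x

/-- The character ring `C(H^*)`, i.e. the space of cocommutative elements of `H`,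
as a `k`-subspace of `H`. -/
def charRing : Submodule k H :=
  LinearMap.ker ((TensorProduct.comm k H H).toLinearMap ∘ₗ Coalgebra.comul (R := k)
      - Coalgebra.comul (R := k))

/-- `d` is the irreducible character (of `H^*`) associated to the simple
subcoalgebra `C`: the unique cocommutative element of `C` whose counit is the
positive square root of `dim_k C`. -/
def IsCharacterOf (d : H) (C : Submodule k H) : Prop :=
  d ∈ C ∧ IsCocomm k H d ∧
    Coalgebra.counit (R := k) d = ((Nat.sqrt (Module.finrank k ↥C) : ℕ) : k)

/-- The right coset `CK` of a subcoalgebra `C`, i.e. the subspace `C·K`. -/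
def CKsub (K : Subalgebra k H) (C : Submodule k H) : Submodule k H :=
  C * K.toSubmodule

/-- The conjugate Hopf subalgebra `ᶜK` of `K` by a simple subcoalgebra `C`
(with associated irreducible character `c`): the span of all simple
subcoalgebras of `H` whose irreducible character `d` satisfies
`d·c·Λ_K = ε(d)·c·Λ_K`.  (The condition is stated for all cocommutative
elements of `C` resp. `D`; this is equivalent, since the cocommutative
elements of a simple subcoalgebra are exactly the scalar multiples of its
irreducible character.) -/
def conjK (K : Subalgebra k H) (Λ : H) (C : Submodule k H) : Submodule k H :=
  sSup {D : Submodule k H | IsSimpleSubcoalgebra k H D ∧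
    ∀ d ∈ D, IsCocomm k H d → ∀ c ∈ C, IsCocomm k H c →
      d * (c * Λ) = Coalgebra.counit (R := k) d • (c * Λ)}

/-- A complete irredundant system of representatives (by simple subcoalgebras)
of the double cosets `L\H/K`.  (Taking `L = ⊥` gives a system of
representatives of the right cosets `H/K`.) -/
def IsDoubleCosetReps (L K : Subalgebra k H) {ι : Type} (rep : ι → Submodule k H) : Prop :=
  (∀ i, IsSimpleSubcoalgebra k H (rep i)) ∧
  (∀ i j, L.toSubmodule * rep i * K.toSubmodule = L.toSubmodule * rep j * K.toSubmodule
      → i = j) ∧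
  (∀ C : Submodule k H, IsSimpleSubcoalgebra k H C →
      ∃ i, C ≤ L.toSubmodule * rep i * K.toSubmodule)

section Ind

variable (K : Subalgebra k H) (M : Type v) [AddCommGroup M] [Module k M]
  [Module ↥K M] [IsScalarTower k ↥K M]

/-- The relations defining the induced module `H ⊗_K M` as a quotient of
`H ⊗_k M`: the `H`-submodule generated by the elements `a ⊗ m - 1 ⊗ a·m`
for `a ∈ K` (equivalently, spanned by all `h·a ⊗ m - h ⊗ a·m`). -/
def indRel : Submodule H (H ⊗[k] M) :=
  Submodule.span H {z | ∃ (a : ↥K) (m : M),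
    z = (a : H) ⊗ₜ[k] m - (1 : H) ⊗ₜ[k] (a • m)}

/-- The induced module `M↑_K^H = H ⊗_K M`, a left `H`-module. -/
abbrev Ind := (H ⊗[k] M) ⧸ indRel k H K M

variable (C : Submodule k H)

/-- The underlying space `CK ⊗_k M` of which the conjugate module `ᶜM` is a
quotient. -/
def CKM : Type _ := ↥(CKsub k H K C) ⊗[k] M

instance : AddCommGroup (CKM k H K M C) :=
  inferInstanceAs (AddCommGroup (↥(CKsub k H K C) ⊗[k] M))

instance : Module k (CKM k H K M C) :=
  inferInstanceAs (Module k (↥(CKsub k H K C) ⊗[k] M))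

/-- The pure tensor `x ⊗ m` as an element of `CK ⊗_k M`. -/
def ckmk (x : ↥(CKsub k H K C)) (m : M) : CKM k H K M C := x ⊗ₜ[k] m

/-- The relations defining the conjugate module `ᶜM = CK ⊗_K M` as a quotient
of `CK ⊗_k M`: `x·a ⊗ m - x ⊗ a·m` for `a ∈ K`. -/
def conjRel : Submodule k (CKM k H K M C) :=
  Submodule.span k {z | ∃ (x : ↥(CKsub k H K C)) (a : ↥K) (m : M)
    (hxa : (x : H) * (a : H) ∈ CKsub k H K C),
    z = ckmk k H K M C ⟨(x : H) * (a : H), hxa⟩ m - ckmk k H K M C x (a • m)}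

/-- The conjugate module `ᶜM := CK ⊗_K M`. -/
abbrev ConjM := CKM k H K M C ⧸ conjRel k H K M C

/-- The canonical copy of the conjugate module `ᶜM = CK ⊗_K M` inside
`H ⊗_K M` (the image of `CK ⊗_K M` under multiplication; this is indeed a
copy of `ᶜM` since `H` is a free right `K`-module and `CK` is one of the
coset summands). -/
def conjMsub : Submodule k (Ind k H K M) :=
  Submodule.span k {z | ∃ (x : H) (_ : x ∈ CKsub k H K C) (m : M),
    z = Submodule.Quotient.mk (x ⊗ₜ[k] m)}

end Ind

section Comp

variable (L K : Subalgebra k H) (Λ : H) (C : Submodule k H)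
variable (M : Type v) [AddCommGroup M] [Module k M] [Module ↥K M] [IsScalarTower k ↥K M]

/-- The underlying space `L ⊗_k (CK ⊗_k M)`. -/
def LCM : Type _ := ↥L ⊗[k] CKM k H K M C

instance : AddCommGroup (LCM k H L K C M) :=
  inferInstanceAs (AddCommGroup (↥L ⊗[k] CKM k H K M C))

instance : Module k (LCM k H L K C M) :=
  inferInstanceAs (Module k (↥L ⊗[k] CKM k H K M C))

/-- The pure tensor `l ⊗ w` as an element of `L ⊗_k (CK ⊗_k M)`. -/
def lcmk (l : ↥L) (w : CKM k H K M C) : LCM k H L K C M := l ⊗ₜ[k] w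

/-- The relations defining `L ⊗_{L ∩ ᶜK} ᶜM` as a quotient of
`L ⊗_k (CK ⊗_k M)`: the balancedness relations over `L ∩ ᶜK` (first set),
together with (the image of) the relations defining `ᶜM = CK ⊗_K M`
(second set). -/
def compRel : Submodule k (LCM k H L K C M) :=
  Submodule.span k
    ({z | ∃ (l : ↥L) (a : H) (haL : a ∈ L) (_ : a ∈ conjK k H K Λ C)
        (x : ↥(CKsub k H K C)) (m : M) (hax : a * (x : H) ∈ CKsub k H K C),
        z = lcmk k H L K C M ⟨(l : H) * a, mul_mem l.2 haL⟩ (ckmk k H K M C x m)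
          - lcmk k H L K C M l (ckmk k H K M C ⟨a * (x : H), hax⟩ m)} ∪
     {z | ∃ (l : ↥L) (x : ↥(CKsub k H K C)) (a : ↥K) (m : M)
        (hxa : (x : H) * (a : H) ∈ CKsub k H K C),
        z = lcmk k H L K C M l (ckmk k H K M C ⟨(x : H) * (a : H), hxa⟩ m)
          - lcmk k H L K C M l (ckmk k H K M C x (a • m))})

/-- The module `L ⊗_{L ∩ ᶜK} ᶜM` (a left `L`-module via multiplication on the
first tensor factor). -/
abbrev Comp := LCM k H L K C M ⧸ compRel k H L K Λ C M

end Comp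

open DirectSum

section Mackey

variable (L K : Subalgebra k H) (Λ : H)

/-- The Mackey isomorphism property for the pair `(L, K)` at the `K`-module
`M`: for any system of double coset representatives, the left-multiplication
map `⊕_C L ⊗_{L ∩ ᶜK} ᶜM → M↑_K^H↓_L^H`, `l ⊗ v ↦ l·v`, is an isomorphism of
`L`-modules.  (A `k`-linear map satisfying the displayed formula on the
spanning elements is automatically `L`-equivariant for the evident
`L`-actions, so this property is stated for `k`-linear maps.) -/
def MackeyAt (M : Type v) [AddCommGroup M] [Module k M] [Module ↥K M]
    [IsScalarTower k ↥K M] [Module.Finite k M] : Prop :=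
  ∀ (ι : Type) [DecidableEq ι] (rep : ι → Submodule k H),
    IsDoubleCosetReps k H L K rep →
    ∃ π : (⨁ i : ι, Comp k H L K Λ (rep i) M) →ₗ[k] Ind k H K M,
      Function.Bijective π ∧
      ∀ (i : ι) (l : ↥L) (x : ↥(CKsub k H K (rep i))) (m : M),
        π (DirectSum.of (fun i => Comp k H L K Λ (rep i) M) i
            (Submodule.Quotient.mk (lcmk k H L K (rep i) M l (ckmk k H K M (rep i) x m)))) =
          Submodule.Quotient.mk (((l : H) * (x : H)) ⊗ₜ[k] m)

/-- `(L, K)` is a Mackey pair of Hopf subalgebras of `H` (here `Λ` is the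
idempotent integral of `K`): for every finite-dimensional `K`-module `M` the
left-multiplication homomorphism `π_M` is an isomorphism. -/
def IsMackeyPair : Prop :=
  ∀ (M : Type v) [AddCommGroup M] [Module k M] [Module ↥K M]
    [IsScalarTower k ↥K M] [Module.Finite k M], MackeyAt k H L K Λ M

end Mackey


section Statements

/-- The left adjoint action `h ⊗ x ↦ ∑ h₁ x S(h₂)` of `H` on itself, as a
linear map. -/
def adActL : H →ₗ[k] H →ₗ[k] H :=
  (TensorProduct.lift
    (LinearMap.mk₂ k
      (fun a b => (LinearMap.mulRight k (HopfAlgebra.antipode (R := k) b)).comp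
        (LinearMap.mulLeft k a))
      (fun a a' b => by ext x; simp [add_mul])
      (fun c a b => by ext x; simp [smul_mul_assoc])
      (fun a b b' => by ext x; simp [mul_add])
      (fun c a b => by ext x; simp [mul_smul_comm]))) ∘ₗ
    Coalgebra.comul (R := k)

/-- The right adjoint action `h ⊗ x ↦ ∑ S(h₁) x h₂` of `H` on itself, as a
linear map. -/
def adActR : H →ₗ[k] H →ₗ[k] H :=
  (TensorProduct.lift
    (LinearMap.mk₂ k
      (fun a b => (LinearMap.mulRight k b).comp
        (LinearMap.mulLeft k (HopfAlgebra.antipode (R := k) a)))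
      (fun a a' b => by ext x; simp [add_mul])
      (fun c a b => by ext x; simp [smul_mul_assoc])
      (fun a b b' => by ext x; simp [mul_add])
      (fun c a b => by ext x; simp [mul_smul_comm]))) ∘ₗ
    Coalgebra.comul (R := k)

/-- A normal Hopf subalgebra of `H`: a Hopf subalgebra stable under both the
left and the right adjoint action of `H` on itself. -/
def IsNormalHopfSubalgebra (K : Subalgebra k H) : Prop :=
  IsHopfSubalgebra k H K ∧
    ∀ h : H, ∀ x ∈ K, adActL k H h x ∈ K ∧ adActR k H h x ∈ K

variable [FiniteDimensional k H] [IsSemisimpleRing H]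

/-!
For a normal Hopf subalgebra `K` the cosets satisfy `CK = KC`, so every double coset `KCK` is
just `CK`. Moreover `d(cΛ) = ε(d) cΛ` for `d ∈ K`, because moving `d` past `c` turns it into
adjoint translates of `d`, which stay in `K`; hence `K ≤ ᶜK` and the component of `C` is
`K ⊗_K (CK ⊗_K M) = CK ⊗_K M`. It remains to see that `H = ⨁ CK`. Let `χ` be the Haar functional,
the right integral on `H` with `χ(1) = 1`. For the form `(x, h) ↦ χ(S(x)h)` every subcoalgebra has
a complementary orthogonal, which is again a subcoalgebra, and a simple subcoalgebra lies in a
given subcoalgebra or in its orthogonal. So two cosets coincide or are orthogonal.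

The existence of `χ` is the theorem of Larson and Radford that a semisimple Hopf algebra in
characteristic zero is cosemisimple. The functional `h ↦ Tr(x ↦ S²(x)h)` is a right integral with
value `Tr(S²)` at `1`, so `Tr(S²) ≠ 0` is needed. On the matrix blocks of `H`, `S²` is conjugation
by a unit `u` with `tr(uᵢ) = 1`; with `v = u⁻¹` one finds `Tr(S²) = ∑ tr(vᵢ)`, and
`tr(vᵢ) uᵢ = gᵢ vᵢ` for a group-like element `g`, which has finite order. If `r² = tr(vᵢ)`, then
`vᵢ / r` has finite order and the same trace `r` as its inverse, so `r` is real under every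
embedding in `ℂ` and `tr(vᵢ) = r² > 0`.
-/

open Coalgebra HopfAlgebra

section Hits

variable {R C : Type*} [CommSemiring R] [AddCommMonoid C] [Module R C] [Coalgebra R C]

/-- The left hit action `f ⇀ x = x₁ f(x₂)` of functionals on a coalgebra. -/
def hitL : (C →ₗ[R] R) →ₗ[R] C →ₗ[R] C :=
  LinearMap.lcomp R C comul ∘ₗ LinearMap.compRight R (TensorProduct.rid R C).toLinearMap ∘ₗ
    LinearMap.lTensorHom C

/-- The right hit action `x ↼ f = f(x₁) x₂` of functionals on a coalgebra. -/
def hitR : (C →ₗ[R] R) →ₗ[R] C →ₗ[R] C :=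
  LinearMap.lcomp R C comul ∘ₗ LinearMap.compRight R (TensorProduct.lid R C).toLinearMap ∘ₗ
    LinearMap.rTensorHom C

theorem hitL_apply (f : C →ₗ[R] R) (x : C) :
    hitL f x = TensorProduct.rid R C (f.lTensor C (comul x)) := rfl

theorem hitR_apply (f : C →ₗ[R] R) (x : C) :
    hitR f x = TensorProduct.lid R C (f.rTensor C (comul x)) := rfl

theorem hitL_eq_sum {ι : Type*} {x : C} (r : Repr R x ι) (f : C →ₗ[R] R) :
    hitL f x = ∑ i ∈ r.index, f (r.right i) • r.left i := by
  simp [hitL_apply, ← r.eq]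

theorem hitR_eq_sum {ι : Type*} {x : C} (r : Repr R x ι) (f : C →ₗ[R] R) :
    hitR f x = ∑ i ∈ r.index, f (r.left i) • r.right i := by
  simp [hitR_apply, ← r.eq]

@[simp]
theorem hitL_counit (x : C) : hitL (counit : C →ₗ[R] R) x = x := by
  simp [hitL_apply]

@[simp]
theorem hitR_counit (x : C) : hitR (counit : C →ₗ[R] R) x = x := by
  simp [hitR_apply]

theorem apply_hitR (f g : C →ₗ[R] R) (x : C) : f (hitR g x) = g (hitL f x) := by
  simp [hitR_eq_sum (ℛ R x), hitL_eq_sum (ℛ R x), mul_comm]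

@[simp]
theorem counit_hitR (f : C →ₗ[R] R) (x : C) : counit (R := R) (hitR f x) = f x := by
  rw [apply_hitR, hitL_counit]

theorem hitL_hitL (f g : C →ₗ[R] R) (x : C) : hitL f (hitL g x) = hitL (f ∘ₗ hitL g) x := by
  have h := congrArg ((TensorProduct.rid R C).toLinearMap ∘ₗ
    (LinearMap.mul' R R ∘ₗ TensorProduct.map f g).lTensor C)
    (sum_tmul_tmul_eq (ℛ R x) (fun i => ℛ R ((ℛ R x).left i)) fun i => ℛ R ((ℛ R x).right i))
  simp_rw [hitL_eq_sum (ℛ R x) g, map_sum, map_smul]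
  simpa [hitL_eq_sum (ℛ R _), Finset.smul_sum, Finset.sum_smul, smul_smul, mul_comm] using h

theorem hitR_hitR (f g : C →ₗ[R] R) (x : C) : hitR f (hitR g x) = hitR (f ∘ₗ hitR g) x := by
  have h := congrArg ((TensorProduct.lid R C).toLinearMap ∘ₗ
    (LinearMap.mul' R R ∘ₗ TensorProduct.map g f).rTensor C ∘ₗ
      (TensorProduct.assoc R C C C).symm.toLinearMap)
    (sum_tmul_tmul_eq (ℛ R x) (fun i => ℛ R ((ℛ R x).left i)) fun i => ℛ R ((ℛ R x).right i))
  simp_rw [hitR_eq_sum (ℛ R x) g, map_sum, map_smul]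
  simpa [hitR_eq_sum (ℛ R _), Finset.smul_sum, Finset.sum_smul, smul_smul, mul_comm] using h.symm

section Bialgebra

variable {A : Type*} [Semiring A] [Bialgebra R A]

theorem hitL_one (f : A →ₗ[R] R) : hitL f (1 : A) = f 1 • 1 := by
  simp [hitL_apply, Bialgebra.comul_one, Algebra.TensorProduct.one_def]

theorem hitR_mul {ι : Type*} {x : A} (r : Repr R x ι) (f : A →ₗ[R] R) (y : A) :
    hitR f (x * y) =
      ∑ i ∈ r.index, r.right i * hitR (f ∘ₗ LinearMap.mulLeft R (r.left i)) y := by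
  rw [hitR_eq_sum (r.mul (ℛ R y))]
  simp [hitR_eq_sum (ℛ R y), Finset.sum_product, Finset.mul_sum]

theorem hitL_mul {ι : Type*} {y : A} (r : Repr R y ι) (f : A →ₗ[R] R) (x : A) :
    hitL f (x * y) =
      ∑ i ∈ r.index, hitL (f ∘ₗ LinearMap.mulRight R (r.right i)) x * r.left i := by
  rw [hitL_eq_sum ((ℛ R x).mul r)]
  simp [hitL_eq_sum (ℛ R x), Finset.sum_product_right, Finset.sum_mul]

end Bialgebra

end Hits

section ComulBasis

variable {F C ι : Type*} [Field F] [AddCommGroup C] [Module F C] [Coalgebra F C] [Fintype ι]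

theorem eq_of_forall_dual_apply_eq {V : Type*} [AddCommGroup V] [Module F V] {x y : V}
    (h : ∀ f : V →ₗ[F] F, f x = f y) : x = y := by
  rw [← sub_eq_zero, ← Module.forall_dual_apply_eq_zero_iff F]
  exact fun f => by rw [map_sub, h, sub_self]

theorem comul_eq_sum_hitL_tmul (b : Module.Basis ι F C) (x : C) :
    comul (R := F) x = ∑ i, hitL (b.coord i) x ⊗ₜ[F] b i := by
  simp_rw [hitL_eq_sum (ℛ F x), TensorProduct.sum_tmul, TensorProduct.smul_tmul]
  rw [Finset.sum_comm, ← (ℛ F x).eq]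
  simp_rw [← TensorProduct.tmul_sum, Module.Basis.coord_apply, b.sum_repr]

theorem comul_eq_sum_tmul_hitR (b : Module.Basis ι F C) (x : C) :
    comul (R := F) x = ∑ i, b i ⊗ₜ[F] hitR (b.coord i) x := by
  simp_rw [hitR_eq_sum (ℛ F x), TensorProduct.tmul_sum, ← TensorProduct.smul_tmul]
  rw [Finset.sum_comm, ← (ℛ F x).eq]
  simp_rw [← TensorProduct.sum_tmul, Module.Basis.coord_apply, b.sum_repr]

end ComulBasis

section Antipode

variable {R A : Type*} [CommSemiring R] [Semiring A] [HopfAlgebra R A]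

open WithConv

theorem algHom_comp_antipode_mul_self {B : Type*} [Semiring B] [Algebra R B] (i : A →ₐ[R] B) :
    toConv (i.toLinearMap ∘ₗ antipode R) * toConv i.toLinearMap = 1 := by
  ext x
  rw [(ℛ R x).convMul_apply]
  simpa [map_sum] using congrArg i (sum_antipode_mul_eq_algebraMap_counit (ℛ R x))

/-- Both sides are convolution inverses of `Δ`. -/
theorem comul_antipode (a : A) :
    comul (R := R) (antipode R a) =
      TensorProduct.map (antipode R) (antipode R) (TensorProduct.comm R A A (comul a)) := by
  let i₁ : A →ₐ[R] A ⊗[R] A := Algebra.TensorProduct.includeLeft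
  let i₂ : A →ₐ[R] A ⊗[R] A := Algebra.TensorProduct.includeRight
  let G := TensorProduct.map (antipode R) (antipode R) ∘ₗ
    (TensorProduct.comm R A A).toLinearMap ∘ₗ comul
  have hδ : toConv comul = toConv i₁.toLinearMap * toConv i₂.toLinearMap := by
    ext x
    rw [(ℛ R x).convMul_apply]
    simp [i₁, i₂, (ℛ R x).eq]
  have hG : toConv G =
      toConv (i₂.toLinearMap ∘ₗ antipode R) * toConv (i₁.toLinearMap ∘ₗ antipode R) := by
    ext x
    rw [(ℛ R x).convMul_apply]
    simp [G, i₁, i₂, ← (ℛ R x).eq]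
  have hinv : toConv G * toConv comul = 1 := by
    rw [hG, hδ, mul_assoc, ← mul_assoc (toConv (i₁.toLinearMap ∘ₗ antipode R)),
      algHom_comp_antipode_mul_self, one_mul, algHom_comp_antipode_mul_self]
  exact congrArg (fun f => f.ofConv a) (left_inv_eq_right_inv hinv LinearMap.comul_right_inv).symm

/-- The decomposition `Δ(S x) = S(x₂) ⊗ S(x₁)` induced by `Δ x = x₁ ⊗ x₂`. -/
@[simps]
def antipodeRepr {ι : Type*} {x : A} (r : Repr R x ι) : Repr R (antipode R x) ι where
  index := r.index
  left i := antipode R (r.right i)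
  right i := antipode R (r.left i)
  eq := by rw [comul_antipode, ← r.eq]; simp

theorem hitR_antipode (f : A →ₗ[R] R) (x : A) :
    hitR f (antipode R x) = antipode R (hitL (f ∘ₗ antipode R) x) := by
  simp [hitR_eq_sum (antipodeRepr (ℛ R x)), hitL_eq_sum (ℛ R x)]

theorem hitL_antipode (f : A →ₗ[R] R) (x : A) :
    hitL f (antipode R x) = antipode R (hitR (f ∘ₗ antipode R) x) := by
  simp [hitL_eq_sum (antipodeRepr (ℛ R x)), hitR_eq_sum (ℛ R x)]

variable (R) in
/-- The square `S²` of the antipode as an algebra endomorphism. -/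
def antipodeSq : A →ₐ[R] A :=
  AlgHom.ofLinearMap (antipode R ∘ₗ antipode R) (by simp) fun x y => by
    simp [antipode_mul_antidistrib]

theorem antipodeSq_apply (x : A) : antipodeSq R x = antipode R (antipode R x) := rfl

theorem hitL_antipodeSq (f : A →ₗ[R] R) (x : A) :
    hitL f (antipodeSq R x) = antipodeSq R (hitL (f ∘ₗ (antipodeSq R).toLinearMap) x) := by
  rw [antipodeSq_apply, hitL_antipode, hitR_antipode]
  rfl

theorem sum_antipode_mul_antipodeSq {ι : Type*} {y : A} (r : Repr R y ι) :
    ∑ i ∈ r.index, antipode R (r.right i) * antipodeSq R (r.left i) =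
      algebraMap R A (counit y) := by
  have := congrArg (antipode R) (sum_antipode_mul_eq_algebraMap_counit r)
  simpa [antipodeSq_apply, antipode_mul_antidistrib, Algebra.algebraMap_eq_smul_one] using this

end Antipode

section Integrals

variable {F A : Type*} [Field F] [Ring A] [HopfAlgebra F A]

theorem sum_apply_mul_basis_mul_coord {ι : Type*} [Fintype ι] (b : Module.Basis ι F A)
    (f : A →ₗ[F] F) (x y : A) : ∑ j, f (x * b j) * b.coord j y = f (x * y) := by
  conv_rhs => rw [← b.sum_repr y, Finset.mul_sum, map_sum]
  simp [mul_comm]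

section Basis

variable {ι : Type*} [Fintype ι] (b : Module.Basis ι F A) (f : A →ₗ[F] F)

theorem sum_hitL_comp_hitL_coord :
    ∑ j, hitL (f ∘ₗ LinearMap.mulRight F (b j) ∘ₗ antipode F) ∘ₗ hitL (b.coord j) =
      f 1 • LinearMap.id := by
  have key : ∑ j, (f ∘ₗ LinearMap.mulRight F (b j) ∘ₗ antipode F) ∘ₗ hitL (b.coord j) =
      f 1 • counit := by
    ext y
    have h := congrArg f (sum_antipode_mul_eq_smul (ℛ F y))
    simp only [LinearMap.sum_apply, LinearMap.comp_apply, hitL_eq_sum (ℛ F y), map_sum, map_smul,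
      smul_eq_mul, LinearMap.mulRight_apply] at h ⊢
    rw [Finset.sum_comm]
    simp_rw [mul_comm (b.coord _ _), sum_apply_mul_basis_mul_coord, h]
    simp [mul_comm]
  ext x
  simp only [LinearMap.sum_apply, LinearMap.comp_apply, hitL_hitL]
  rw [← LinearMap.sum_apply, ← map_sum, key]
  simp

theorem sum_hitL_coord_comp_mulRight_comp_antipodeSq (h : A) :
    ∑ j, hitL (b.coord j) ∘ₗ (LinearMap.mulRight F h ∘ₗ (antipodeSq F).toLinearMap) ∘ₗ
        hitL (f ∘ₗ LinearMap.mulRight F (b j) ∘ₗ antipode F) =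
      LinearMap.mulRight F (hitL f h) ∘ₗ (antipodeSq F).toLinearMap := by
  have key (c : A) : ∑ j, ((b.coord j ∘ₗ LinearMap.mulRight F c) ∘ₗ (antipodeSq F).toLinearMap) ∘ₗ
      hitL (f ∘ₗ LinearMap.mulRight F (b j) ∘ₗ antipode F) = f c • counit := by
    ext y
    have h := congrArg (fun z => f (z * c)) (sum_antipode_mul_antipodeSq (ℛ F y))
    simp only [Finset.sum_mul, mul_assoc, Algebra.algebraMap_eq_smul_one, smul_mul_assoc, one_mul,
      LinearMap.sum_apply, LinearMap.comp_apply, hitL_eq_sum (ℛ F y), map_sum, map_smul,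
      smul_eq_mul, LinearMap.mulRight_apply] at h ⊢
    rw [Finset.sum_comm]
    simp_rw [AlgHom.toLinearMap_apply, sum_apply_mul_basis_mul_coord, h]
    simp [mul_comm]
  ext x
  simp only [LinearMap.sum_apply, LinearMap.comp_apply, LinearMap.mulRight_apply,
    AlgHom.toLinearMap_apply, hitL_mul (ℛ F h), hitL_antipodeSq, hitL_hitL]
  rw [Finset.sum_comm]
  simp_rw [← Finset.sum_mul, ← map_sum, ← LinearMap.sum_apply, ← map_sum, key]
  simp [hitL_eq_sum (ℛ F h), Finset.mul_sum]

end Basis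

variable (F A) in
/-- The functional `h ↦ Tr(x ↦ S²(x) h)`. -/
def sqTraceR : A →ₗ[F] F :=
  LinearMap.trace F A ∘ₗ LinearMap.lcomp F A (antipodeSq F).toLinearMap ∘ₗ (LinearMap.mul F A).flip

theorem sqTraceR_apply (h : A) : sqTraceR F A h =
    LinearMap.trace F A (LinearMap.mulRight F h ∘ₗ (antipodeSq F).toLinearMap) := rfl

variable (F A) in
/-- The functional `h ↦ Tr(x ↦ h S²(x))`. -/
def sqTraceL : A →ₗ[F] F :=
  LinearMap.trace F A ∘ₗ LinearMap.lcomp F A (antipodeSq F).toLinearMap ∘ₗ LinearMap.mul F A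

theorem sqTraceL_apply (h : A) : sqTraceL F A h =
    LinearMap.trace F A (LinearMap.mulLeft F h ∘ₗ (antipodeSq F).toLinearMap) := rfl

section FiniteDimensional

variable [FiniteDimensional F A]

theorem sqTraceR_hitL (f : A →ₗ[F] F) (h : A) :
    sqTraceR F A (hitL f h) = f 1 * sqTraceR F A h := by
  let b := Module.finBasis F A
  let T := LinearMap.mulRight F h ∘ₗ (antipodeSq F).toLinearMap
  let p j := f ∘ₗ LinearMap.mulRight F (b j) ∘ₗ antipode F
  calc sqTraceR F A (hitL f h)
      = LinearMap.trace F A (∑ j, hitL (b.coord j) ∘ₗ T ∘ₗ hitL (p j)) := by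
        rw [sqTraceR_apply, ← sum_hitL_coord_comp_mulRight_comp_antipodeSq b f h]
    _ = LinearMap.trace F A (∑ j, T ∘ₗ hitL (p j) ∘ₗ hitL (b.coord j)) := by
        simp_rw [map_sum, LinearMap.trace_comp_comm' (_ ∘ₗ _) (hitL (b.coord _)),
          LinearMap.comp_assoc]
    _ = LinearMap.trace F A (T ∘ₗ (f 1 • LinearMap.id)) := by
        congr 1
        rw [← sum_hitL_comp_hitL_coord b f]
        ext
        simp [p]
    _ = f 1 * sqTraceR F A h := by
        rw [LinearMap.comp_smul, LinearMap.comp_id, map_smul, smul_eq_mul, sqTraceR_apply]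

theorem sqTraceL_antipode (a : A) : sqTraceL F A (antipode F a) = sqTraceR F A a := by
  have h : LinearMap.mulLeft F (antipode F a) ∘ₗ (antipodeSq F).toLinearMap =
      (antipode F ∘ₗ LinearMap.mulRight F a) ∘ₗ antipode F := by
    ext x
    simp [antipodeSq_apply, antipode_mul_antidistrib]
  rw [sqTraceL_apply, h, LinearMap.trace_comp_comm', ← LinearMap.comp_assoc,
    LinearMap.trace_comp_comm', sqTraceR_apply]
  rfl

theorem sqTraceR_antipode (a : A) : sqTraceR F A (antipode F a) = sqTraceL F A a := by
  have h : LinearMap.mulRight F (antipode F a) ∘ₗ (antipodeSq F).toLinearMap =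
      (antipode F ∘ₗ LinearMap.mulLeft F a) ∘ₗ antipode F := by
    ext x
    simp [antipodeSq_apply, antipode_mul_antidistrib]
  rw [sqTraceR_apply, h, LinearMap.trace_comp_comm', ← LinearMap.comp_assoc,
    LinearMap.trace_comp_comm', sqTraceL_apply]
  rfl

end FiniteDimensional

/-- `φ` is a left integral on `A`: `x₁ φ(x₂) = φ(x) 1`. -/
def IsLeftIntegral (φ : A →ₗ[F] F) : Prop := ∀ x, hitL φ x = φ x • (1 : A)

/-- `ψ` is a right integral on `A`: `ψ(x₁) x₂ = ψ(x) 1`. -/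
def IsRightIntegral (ψ : A →ₗ[F] F) : Prop := ∀ x, hitR ψ x = ψ x • (1 : A)

variable {ψ : A →ₗ[F] F}

namespace IsRightIntegral

open WithConv in
theorem apply_antipode_mul_hitL (hψ : IsRightIntegral ψ) (f : A →ₗ[F] F) (a h : A) :
    ψ (antipode F a * hitL f h) = ψ (antipode F (hitR f a) * h) := by
  let P : A →ₗ[F] A :=
    hitR.flip h ∘ₗ LinearMap.llcomp F A A F ψ ∘ₗ LinearMap.mul F A ∘ₗ antipode F
  let G : A →ₗ[F] A := (ψ ∘ₗ LinearMap.mulRight F h ∘ₗ antipode F).smulRight 1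
  have hP (x : A) : P x = hitR (ψ ∘ₗ LinearMap.mulLeft F (antipode F x)) h := rfl
  have hSP : toConv (antipode F) * toConv P = toConv G := by
    ext x
    rw [(ℛ F x).convMul_apply]
    exact (hitR_mul (antipodeRepr (ℛ F x)) ψ h).symm.trans (hψ _)
  have hPG : toConv P = toConv LinearMap.id * toConv G := by
    rw [← hSP, ← mul_assoc, LinearMap.id_mul_antipode, one_mul]
  have hPa : P a = ∑ i ∈ (ℛ F a).index, ψ (antipode F ((ℛ F a).right i) * h) • (ℛ F a).left i := by
    have := congrArg (fun p => p a) hPG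
    simpa only [(ℛ F a).convMul_apply, G, ofConv_toConv, LinearMap.id_apply,
      LinearMap.smulRight_apply, LinearMap.comp_apply, LinearMap.mulRight_apply, mul_smul_comm,
      mul_one] using this
  calc ψ (antipode F a * hitL f h)
      = f (P a) := by rw [hP, apply_hitR]; rfl
    _ = ψ (antipode F (hitR f a) * h) := by
      simp [hPa, hitR_eq_sum (ℛ F a), Finset.sum_mul, mul_comm]

theorem comp_antipode (hψ : IsRightIntegral ψ)
    (hS : Function.Injective (antipode F (A := A))) : IsLeftIntegral (ψ ∘ₗ antipode F) := fun x =>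
  hS <| by rw [← hitR_antipode, hψ, map_smul, antipode_one]; rfl

theorem comp_hitR (hψ : IsRightIntegral ψ) (f : A →ₗ[F] F) : IsRightIntegral (ψ ∘ₗ hitR f) :=
  fun x => by rw [← hitR_hitR, hψ]; rfl

theorem apply_antipode (hψ : IsRightIntegral ψ) (hψ1 : ψ 1 = 1) (a : A) :
    ψ (antipode F a) = ψ a := by
  have := hψ.apply_antipode_mul_hitL ψ a 1
  rwa [hitL_one, hψ, hψ1, one_smul, mul_one, mul_one, map_smul, map_smul, antipode_one, hψ1,
    smul_eq_mul, mul_one] at this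

end IsRightIntegral

theorem isRightIntegral_sqTraceR [FiniteDimensional F A] : IsRightIntegral (sqTraceR F A) :=
  fun h => eq_of_forall_dual_apply_eq (F := F) fun f => by
    rw [apply_hitR, sqTraceR_hitL, map_smul, smul_eq_mul, mul_comm]

end Integrals

section NormalizedIntegral

theorem exists_map_eq_one_and_mul_eq_zero {R S : Type*} [Ring R] [IsSemisimpleRing R] [Ring S]
    (f : R →+* S) : ∃ e, f e = 1 ∧ ∀ x, f x = 0 → x * e = 0 := by
  obtain ⟨J, hJ⟩ := exists_isCompl (RingHom.ker f : Submodule R R)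
  obtain ⟨a, ha, e, he, hae⟩ := Submodule.mem_sup.1 (hJ.sup_eq_top ▸ Submodule.mem_top (x := 1))
  refine ⟨e, ?_, fun x hx => ?_⟩
  · have := congrArg f hae
    rwa [map_add, (RingHom.mem_ker (f := f)).1 ha, zero_add, map_one] at this
  · refine (Submodule.disjoint_def.1 hJ.disjoint) _ ?_ (J.smul_mem x he)
    exact (RingHom.mem_ker (f := f)).2 (by rw [map_mul, hx, zero_mul])

variable {F A : Type*} [Field F] [Ring A] [HopfAlgebra F A]

variable (F) in
/-- A left integral `Λ` of `A`, that is `x Λ = ε(x) Λ`, normalized by `ε(Λ) = 1`. -/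
structure IsNormalizedIntegral (Λ : A) : Prop where
  counit_eq_one : counit (R := F) Λ = 1
  mul_eq : ∀ x, x * Λ = counit (R := F) x • Λ

variable (F A) in
theorem exists_isNormalizedIntegral [IsSemisimpleRing A] : ∃ Λ : A, IsNormalizedIntegral F Λ := by
  obtain ⟨e, he, hker⟩ :=
    exists_map_eq_one_and_mul_eq_zero (Bialgebra.counitAlgHom F A : A →+* F)
  refine ⟨e, he, fun x => ?_⟩
  have := hker (x - algebraMap F A (counit x)) (by simp)
  rwa [sub_mul, sub_eq_zero, ← Algebra.smul_def] at this

namespace IsNormalizedIntegral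

variable [FiniteDimensional F A] {Λ : A} (hΛ : IsNormalizedIntegral F Λ)

include hΛ

theorem sqTraceR_eq_one : sqTraceR F A Λ = 1 := by
  have : LinearMap.mulRight F Λ ∘ₗ (antipodeSq F).toLinearMap =
      (counit (R := F) (A := A)).smulRight Λ := by
    ext x
    simp [hΛ.mul_eq, antipodeSq_apply]
  rw [sqTraceR_apply, this, LinearMap.trace_smulRight, hΛ.counit_eq_one]

omit [FiniteDimensional F A] in
theorem apply_antipode_mul_hitL {ψ : A →ₗ[F] F} (hψ : IsRightIntegral ψ) (f : A →ₗ[F] F) (a : A) :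
    ψ (antipode F a * hitL f Λ) = f a * ψ Λ := by
  rw [hψ.apply_antipode_mul_hitL, hΛ.mul_eq, map_smul, counit_antipode, counit_hitR, smul_eq_mul]

theorem sqTraceR_antipode_mul_hitL (f : A →ₗ[F] F) (a : A) :
    sqTraceR F A (antipode F a * hitL f Λ) = f a := by
  rw [hΛ.apply_antipode_mul_hitL isRightIntegral_sqTraceR, hΛ.sqTraceR_eq_one, mul_one]

theorem antipode_injective : Function.Injective (antipode F (A := A)) :=
  fun a a' h => eq_of_forall_dual_apply_eq (F := F) fun f => by
    rw [← hΛ.sqTraceR_antipode_mul_hitL, h, hΛ.sqTraceR_antipode_mul_hitL]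

theorem antipode_surjective : Function.Surjective (antipode F (A := A)) :=
  LinearMap.injective_iff_surjective.1 hΛ.antipode_injective

theorem eq_zero_of_sqTraceR_mul_eq_zero {a : A} (h : ∀ b, sqTraceR F A (a * b) = 0) : a = 0 := by
  obtain ⟨a, rfl⟩ := hΛ.antipode_surjective a
  have : a = 0 := eq_of_forall_dual_apply_eq (F := F) fun f => by
    rw [← hΛ.sqTraceR_antipode_mul_hitL, h, map_zero]
  rw [this, map_zero]

theorem isLeftIntegral_sqTraceL : IsLeftIntegral (sqTraceL F A) := by
  have : sqTraceL F A = sqTraceR F A ∘ₗ antipode F := by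
    ext a
    exact (sqTraceR_antipode a).symm
  exact this ▸ isRightIntegral_sqTraceR.comp_antipode hΛ.antipode_injective

theorem apply_antipode_mul_sqTraceL {ψ : A →ₗ[F] F} (hψ : IsRightIntegral ψ) (a : A) :
    ψ (antipode F a) * sqTraceL F A Λ = sqTraceL F A a * ψ Λ := by
  rw [← hΛ.apply_antipode_mul_hitL hψ, hΛ.isLeftIntegral_sqTraceL, mul_smul_comm, map_smul,
    mul_one, smul_eq_mul, mul_comm]

theorem sqTraceL_eq_one : sqTraceL F A Λ = 1 := by
  have := hΛ.apply_antipode_mul_sqTraceL isRightIntegral_sqTraceR (antipode F Λ)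
  rwa [sqTraceR_antipode, sqTraceL_antipode, hΛ.sqTraceR_eq_one, mul_one, one_mul] at this

theorem eq_smul_sqTraceR {ψ : A →ₗ[F] F} (hψ : IsRightIntegral ψ) : ψ = ψ Λ • sqTraceR F A := by
  ext b
  obtain ⟨a, rfl⟩ := hΛ.antipode_surjective b
  have := hΛ.apply_antipode_mul_sqTraceL hψ a
  rw [hΛ.sqTraceL_eq_one, mul_one] at this
  rw [this, LinearMap.smul_apply, sqTraceR_antipode, smul_eq_mul, mul_comm]

theorem sqTraceL_eq_sqTraceR_mul (b : A) :
    sqTraceL F A b = sqTraceR F A (b * hitL (sqTraceR F A) Λ) := by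
  obtain ⟨a, rfl⟩ := hΛ.antipode_surjective b
  rw [hΛ.sqTraceR_antipode_mul_hitL, sqTraceL_antipode]

theorem hitL_sqTraceR (x : A) :
    hitL (sqTraceR F A) x = sqTraceR F A x • hitL (sqTraceR F A) Λ :=
  eq_of_forall_dual_apply_eq (F := F) fun f => by
    have := congrArg (· x) (hΛ.eq_smul_sqTraceR (isRightIntegral_sqTraceR.comp_hitR f))
    simp only [LinearMap.comp_apply, LinearMap.smul_apply, smul_eq_mul] at this
    rw [map_smul, ← apply_hitR, ← apply_hitR, this, smul_eq_mul, mul_comm]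

theorem isGroupLikeElem_hitL_sqTraceR : IsGroupLikeElem F (hitL (sqTraceR F A) Λ) where
  counit_eq_one := by rw [← apply_hitR, hitR_counit, hΛ.sqTraceR_eq_one]
  comul_eq_tmul_self := by
    let g := hitL (sqTraceR F A) Λ
    have hg (f : A →ₗ[F] F) : hitL f g = f g • g := by
      have : f ∘ₗ hitL (sqTraceR F A) = f g • sqTraceR F A := by
        ext x
        simp [hΛ.hitL_sqTraceR x, g, mul_comm]
      rw [hitL_hitL, this, map_smul, LinearMap.smul_apply]
    let b := Module.finBasis F A
    rw [comul_eq_sum_hitL_tmul b]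
    simp_rw [← show g = hitL (sqTraceR F A) Λ from rfl, hg, TensorProduct.smul_tmul,
      ← TensorProduct.tmul_sum, Module.Basis.coord_apply, b.sum_repr]

end IsNormalizedIntegral

theorem exists_pow_eq_one_of_isGroupLikeElem [FiniteDimensional F A] {g : A}
    (hg : IsGroupLikeElem F g) : ∃ n, 0 < n ∧ g ^ n = 1 := by
  have : Finite (GroupLike F A) := (linearIndep_groupLikeVal (R := F) (A := A)).finite
  obtain ⟨n, hn, h⟩ :=
    isOfFinOrder_iff_pow_eq_one.1 (isOfFinOrder_of_finite (⟨g, hg⟩ : GroupLike F A))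
  exact ⟨n, hn, congrArg GroupLike.val h⟩

end NormalizedIntegral

section TracePositivity

theorem trace_eq_sum_of_apply_basis_eq_smul {R V ι : Type*} [CommRing R] [AddCommGroup V]
    [Module R V] [Fintype ι] (b : Module.Basis ι R V) {f : Module.End R V} {μ : ι → R}
    (h : ∀ i, f (b i) = μ i • b i) : LinearMap.trace R V f = ∑ i, μ i := by
  classical
  simp [LinearMap.trace_eq_matrix_trace R b, Matrix.trace, LinearMap.toMatrix_apply, h]

theorem isSemisimple_of_pow_eq_one {F V : Type*} [Field F] [CharZero F] [AddCommGroup V]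
    [Module F V] {f : Module.End F V} {m : ℕ} (hm : m ≠ 0) (hf : f ^ m = 1) : f.IsSemisimple :=
  Module.End.isSemisimple_of_squarefree_aeval_eq_zero (p := Polynomial.X ^ m - Polynomial.C 1)
    (Polynomial.separable_X_pow_sub_C 1 (by exact_mod_cast hm) one_ne_zero).squarefree
    (by simp [hf])

section

variable {F V : Type*} [Field F] [IsAlgClosed F] [AddCommGroup V] [Module F V]
  [FiniteDimensional F V] {f : Module.End F V}

theorem exists_basis_apply_eq_smul (hf : f.IsSemisimple) :
    ∃ (b : Module.Basis (Fin (Module.finrank F V)) F V) (μ : Fin (Module.finrank F V) → F),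
      ∀ i, f (b i) = μ i • b i := by
  classical
  have hint : DirectSum.IsInternal f.eigenspace := by
    refine DirectSum.isInternal_submodule_of_iSupIndep_of_iSup_eq_top f.eigenspaces_iSupIndep ?_
    rw [← f.iSup_maxGenEigenspace_eq_top]
    exact iSup_congr fun μ => (hf.isFinitelySemisimple.maxGenEigenspace_eq_eigenspace μ).symm
  let b := hint.collectedBasis fun μ => Module.finBasis F (f.eigenspace μ)
  have := FiniteDimensional.fintypeBasisIndex b
  let e := Fintype.equivFinOfCardEq (Module.finrank_eq_card_basis b).symm
  refine ⟨b.reindex e, fun i => (e.symm i).1, fun i => ?_⟩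
  rw [Module.Basis.reindex_apply]
  exact Module.End.mem_eigenspace_iff.1 (hint.collectedBasis_mem _ (e.symm i))

variable [CharZero F]

/-- The traces of `f` and of `f⁻¹ = f ^ m` are complex conjugate under every embedding. -/
theorem exists_conj_trace_eq_trace_pow (τ : algebraicClosure ℚ F →ₐ[ℚ] ℂ) {m : ℕ}
    (hf : f ^ (m + 1) = 1) :
    ∃ z w : algebraicClosure ℚ F, (z : F) = LinearMap.trace F V f ∧
      (w : F) = LinearMap.trace F V (f ^ m) ∧ starRingEnd ℂ (τ z) = τ w := by
  obtain ⟨b, μ, hμ⟩ := exists_basis_apply_eq_smul (isSemisimple_of_pow_eq_one m.succ_ne_zero hf)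
  have hpow (j : ℕ) (i) : (f ^ j) (b i) = μ i ^ j • b i :=
    Module.End.HasEigenvector.pow_apply
      ⟨Module.End.mem_eigenspace_iff.2 (hμ i), b.ne_zero i⟩ j
  have hroot (i) : μ i ^ (m + 1) = 1 := by
    refine smul_left_injective F (b.ne_zero i) ?_
    simp only [← hpow, hf, Module.End.one_apply, one_smul]
  have halg (i) : μ i ∈ algebraicClosure ℚ F :=
    mem_algebraicClosure_iff.2
      (IsIntegral.of_pow m.succ_pos (hroot i ▸ isIntegral_one)).isAlgebraic
  let ν (i) : algebraicClosure ℚ F := ⟨μ i, halg i⟩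
  refine ⟨∑ i, ν i, ∑ i, ν i ^ m, ?_, ?_, ?_⟩
  · simp [trace_eq_sum_of_apply_basis_eq_smul b hμ, ν]
  · simp [trace_eq_sum_of_apply_basis_eq_smul b (hpow m), ν]
  · simp only [map_sum, map_pow]
    refine Finset.sum_congr rfl fun i _ => ?_
    have hτ : τ (ν i) ^ (m + 1) = 1 := by
      rw [← map_pow, show ν i ^ (m + 1) = 1 from Subtype.ext (hroot i), map_one]
    rw [← Complex.inv_eq_conj (Complex.norm_eq_one_of_pow_eq_one hτ m.succ_ne_zero)]
    exact inv_eq_of_mul_eq_one_right (by rwa [← pow_succ'])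

end

section

open scoped ComplexOrder

variable {F ι : Type*} [Field F] [IsAlgClosed F] [CharZero F] [Fintype ι] [DecidableEq ι]
  (τ : algebraicClosure ℚ F →ₐ[ℚ] ℂ)

theorem exists_eq_trace_sq_and_pos {W V : Matrix ι ι F} {n : ℕ} (hn : n ≠ 0) (hW : W ^ n = 1)
    (hWV : W * V = 1) (htr : W.trace = V.trace) (h0 : W.trace ≠ 0) :
    ∃ z : algebraicClosure ℚ F, (z : F) = W.trace ^ 2 ∧ 0 < τ z := by
  obtain ⟨m, rfl⟩ := Nat.exists_eq_succ_of_ne_zero hn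
  have hWm : W ^ m = V := by
    rw [← mul_one (W ^ m), ← hWV, ← mul_assoc, ← pow_succ, hW, one_mul]
  have trace_toLin (M : Matrix ι ι F) :
      LinearMap.trace F (ι → F) (Matrix.toLinAlgEquiv' M) = M.trace :=
    Matrix.trace_toLin'_eq M
  obtain ⟨z, w, hz, hw, hconj⟩ := exists_conj_trace_eq_trace_pow τ
    (f := Matrix.toLinAlgEquiv' W) (m := m) (by rw [← map_pow, hW, map_one])
  rw [trace_toLin] at hz
  rw [← map_pow, hWm, trace_toLin, ← htr, ← hz] at hw
  rw [Subtype.ext hw] at hconj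
  obtain ⟨t, ht⟩ := Complex.conj_eq_iff_real.1 hconj
  have hz0 : τ z ≠ 0 := by
    rw [Ne, map_eq_zero_iff τ τ.injective]
    rintro rfl
    exact h0 hz.symm
  rw [ht, Complex.ofReal_ne_zero] at hz0
  refine ⟨z ^ 2, by simp [hz], ?_⟩
  rw [map_pow, ht]
  exact_mod_cast sq_pos_of_ne_zero hz0

/-- The idea is to rescale `U` by a square root `r` of its trace: `W = r⁻¹ U` has trace `r`, and so
has its inverse `r V`; since `W ^ 2` is inverse to `G`, the matrix `W` has finite order. -/
theorem exists_eq_trace_and_pos {U V G : Matrix ι ι F} {N : ℕ} (hN : N ≠ 0) (hG : G ^ N = 1)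
    (hUV : U * V = 1) (hV : V.trace = 1) (hGU : U.trace • V = G * U) :
    ∃ z : algebraicClosure ℚ F, (z : F) = U.trace ∧ 0 < τ z := by
  have hVU : V * U = 1 := mul_eq_one_comm.1 hUV
  obtain ⟨r, hr⟩ := IsAlgClosed.exists_pow_nat_eq U.trace two_pos
  have hr0 : r ≠ 0 := by
    rintro rfl
    rw [zero_pow two_ne_zero] at hr
    have hG0 : G = 0 := by rw [← mul_one G, ← hUV, ← mul_assoc, ← hGU, ← hr, zero_smul, zero_mul]
    rw [hG0, zero_pow hN] at hG
    rw [← mul_one V, ← hG, mul_zero, Matrix.trace_zero] at hV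
    exact zero_ne_one hV
  have hGW : G * (r⁻¹ • U) ^ 2 = 1 := by
    rw [smul_pow, mul_smul_comm, pow_two U, ← mul_assoc, ← hGU, smul_mul_assoc, hVU, smul_smul,
      ← hr, ← mul_pow, inv_mul_cancel₀ hr0, one_pow, one_smul]
  have hW : (r⁻¹ • U) ^ (2 * N) = 1 := by
    have := pow_mul_pow_eq_one N hGW
    rwa [hG, one_mul, ← pow_mul] at this
  have htr : (r⁻¹ • U).trace = r := by
    rw [Matrix.trace_smul, ← hr, smul_eq_mul, pow_two, inv_mul_cancel_left₀ hr0]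
  have := exists_eq_trace_sq_and_pos τ (V := r • V) (mul_ne_zero two_ne_zero hN) hW
    (by simp [hUV, smul_smul, hr0]) (by rw [htr, Matrix.trace_smul, hV, smul_eq_mul, mul_one])
    (by rwa [htr])
  rwa [htr, hr] at this

end

end TracePositivity

section PiMatrix

variable {F ι : Type*} [Field F] {n : ι → Type*} [∀ i, Fintype (n i)]

variable (F n) in
/-- The algebra of block diagonal matrices with blocks indexed by `ι`, the `i`-th one having rows
and columns indexed by `n i`. -/
abbrev PiMatrix : Type _ := ∀ i, Matrix (n i) (n i) F

variable [Fintype ι]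

/-- The sum of the traces of the blocks. -/
def piTrace : PiMatrix F n →ₗ[F] F := ∑ i, Matrix.traceLinearMap _ F F ∘ₗ LinearMap.proj i

theorem piTrace_apply (a : PiMatrix F n) : piTrace a = ∑ i, (a i).trace := by simp [piTrace]

theorem piTrace_mul_comm (a b : PiMatrix F n) : piTrace (a * b) = piTrace (b * a) := by
  simp only [piTrace_apply, Pi.mul_apply]
  exact Finset.sum_congr rfl fun i _ => Matrix.trace_mul_comm _ _

theorem eq_of_piTrace_mul {a b : PiMatrix F n} (h : ∀ x, piTrace (x * a) = piTrace (x * b)) :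
    a = b := by
  classical
  have piTrace_single (i) (x : Matrix (n i) (n i) F) (a : PiMatrix F n) :
      piTrace (Pi.single i x * a) = (x * a i).trace := by
    rw [piTrace_apply, Finset.sum_eq_single i] <;> simp +contextual
  ext i j l
  simpa [piTrace_single, Matrix.trace_single_mul] using h (Pi.single i (Matrix.single l j 1))

theorem exists_eq_piTrace_mul (φ : PiMatrix F n →ₗ[F] F) : ∃ v, ∀ a, φ a = piTrace (a * v) := by
  classical
  let T : PiMatrix F n →ₗ[F] (PiMatrix F n →ₗ[F] F) :=
    (LinearMap.mul F (PiMatrix F n)).flip.compr₂ piTrace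
  have hT : Function.Injective T := fun a b h =>
    eq_of_piTrace_mul fun x => congrArg (fun f => f x) h
  obtain ⟨v, hv⟩ := (LinearMap.injective_iff_surjective_of_finrank_eq_finrank
    (Subspace.dual_finrank_eq (K := F) (V := PiMatrix F n)).symm).1 hT φ
  exact ⟨v, fun a => by rw [← hv]; rfl⟩

theorem trace_mulLeft_comp_mulRight (a b : PiMatrix F n) :
    LinearMap.trace F (PiMatrix F n) (LinearMap.mulLeft F a ∘ₗ LinearMap.mulRight F b) =
      ∑ i, (a i).trace * (b i).trace := by
  classical
  let B := Pi.basis fun i => Matrix.stdBasis F (n i) (n i)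
  have hB (i j l) : B ⟨i, j, l⟩ i = Matrix.single j l 1 := by
    simp [B, Pi.basis_apply, Matrix.stdBasis_eq_single]
  rw [LinearMap.trace_eq_matrix_trace F B]
  simp only [Matrix.trace, Matrix.diag, LinearMap.toMatrix_apply, Fintype.sum_sigma,
    Fintype.sum_prod_type]
  refine Finset.sum_congr rfl fun i _ => ?_
  rw [Finset.sum_mul_sum]
  refine Finset.sum_congr rfl fun j _ => Finset.sum_congr rfl fun l _ => ?_
  rw [Pi.basis_repr, LinearMap.comp_apply, LinearMap.mulLeft_apply, LinearMap.mulRight_apply,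
    Pi.mul_apply, Pi.mul_apply, hB]
  simp [Matrix.stdBasis, Matrix.mul_apply, Matrix.single_apply, ite_and]

variable [∀ i, DecidableEq (n i)]

/-- An endomorphism whose twisted trace form `a ↦ Tr (x ↦ σ(x) a)` is nondegenerate is inner. -/
theorem exists_conj_of_trace_nondegenerate (σ : PiMatrix F n →ₐ[F] PiMatrix F n)
    (hnd : ∀ a, (∀ b, LinearMap.trace F _ (LinearMap.mulRight F (a * b) ∘ₗ σ.toLinearMap) = 0) →
      a = 0) :
    ∃ u v, u * v = 1 ∧ v * u = 1 ∧ (∀ x, σ x = u * x * v) ∧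
      ∀ a, LinearMap.trace F _ (LinearMap.mulRight F a ∘ₗ σ.toLinearMap) = piTrace (a * v) := by
  obtain ⟨v, hv⟩ := exists_eq_piTrace_mul (LinearMap.trace F (PiMatrix F n) ∘ₗ
    LinearMap.lcomp F (PiMatrix F n) σ.toLinearMap ∘ₗ (LinearMap.mul F (PiMatrix F n)).flip)
  replace hv (a : PiMatrix F n) :
      LinearMap.trace F _ (LinearMap.mulRight F a ∘ₗ σ.toLinearMap) = piTrace (a * v) := hv a
  have hinj : Function.Injective (LinearMap.mulLeft F v) := by
    refine (injective_iff_map_eq_zero _).2 fun y hy => hnd y fun b => ?_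
    rw [LinearMap.mulLeft_apply] at hy
    rw [hv, piTrace_mul_comm, ← mul_assoc, hy, zero_mul, map_zero]
  obtain ⟨u, hvu⟩ := LinearMap.injective_iff_surjective.1 hinj 1
  rw [LinearMap.mulLeft_apply] at hvu
  have huv : u * v = 1 := hinj (by simp [← mul_assoc, hvu])
  have hcomm (x : PiMatrix F n) : x * v = v * σ x := by
    refine eq_of_piTrace_mul fun a => ?_
    have : LinearMap.mulRight F (a * x) ∘ₗ σ.toLinearMap =
        LinearMap.mulRight F x ∘ₗ LinearMap.mulRight F a ∘ₗ σ.toLinearMap := by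
      rw [LinearMap.mulRight_mul, LinearMap.comp_assoc]
    rw [← mul_assoc, ← hv, this, LinearMap.trace_comp_comm', ← mul_assoc, piTrace_mul_comm (a * v),
      ← mul_assoc, ← hv]
    congr 1
    ext y : 1
    simp [mul_assoc]
  exact ⟨u, v, huv, hvu, fun x => by rw [mul_assoc, hcomm, ← mul_assoc, huv, one_mul], hv⟩

theorem trace_mulRight_comp_conj {σ : PiMatrix F n →ₐ[F] PiMatrix F n} {u v : PiMatrix F n}
    (hσ : ∀ x, σ x = u * x * v) (a : PiMatrix F n) :
    LinearMap.trace F _ (LinearMap.mulRight F a ∘ₗ σ.toLinearMap) =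
      piTrace (a * fun i => (u i).trace • v i) := by
  have : LinearMap.mulRight F a ∘ₗ σ.toLinearMap =
      LinearMap.mulLeft F u ∘ₗ LinearMap.mulRight F (v * a) := by
    ext x : 1
    simp [hσ, mul_assoc]
  rw [this, trace_mulLeft_comp_mulRight, piTrace_apply]
  refine Finset.sum_congr rfl fun i _ => ?_
  simp [Matrix.trace_mul_comm (a i)]

theorem trace_mulLeft_comp_conj {σ : PiMatrix F n →ₐ[F] PiMatrix F n} {u v : PiMatrix F n}
    (hσ : ∀ x, σ x = u * x * v) (a : PiMatrix F n) :
    LinearMap.trace F _ (LinearMap.mulLeft F a ∘ₗ σ.toLinearMap) =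
      piTrace (a * fun i => (v i).trace • u i) := by
  have : LinearMap.mulLeft F a ∘ₗ σ.toLinearMap =
      LinearMap.mulLeft F (a * u) ∘ₗ LinearMap.mulRight F v := by
    ext x : 1
    simp [hσ, mul_assoc]
  rw [this, trace_mulLeft_comp_mulRight, piTrace_apply]
  refine Finset.sum_congr rfl fun i _ => ?_
  simp [mul_comm]

omit [Fintype ι] in
open scoped ComplexOrder in
theorem trace_ne_zero_of_piMatrix [CharZero F] [IsAlgClosed F] [Finite ι] [Nonempty ι]
    [∀ i, Nonempty (n i)]
    (σ : PiMatrix F n →ₐ[F] PiMatrix F n)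
    (hnd : ∀ a, (∀ b, LinearMap.trace F _ (LinearMap.mulRight F (a * b) ∘ₗ σ.toLinearMap) = 0) →
      a = 0)
    {g : PiMatrix F n} {N : ℕ} (hN : N ≠ 0) (hgN : g ^ N = 1)
    (hg : ∀ a, LinearMap.trace F _ (LinearMap.mulLeft F a ∘ₗ σ.toLinearMap) =
      LinearMap.trace F _ (LinearMap.mulRight F (a * g) ∘ₗ σ.toLinearMap)) :
    LinearMap.trace F _ σ.toLinearMap ≠ 0 := by
  cases nonempty_fintype ι
  obtain ⟨u, v, -, hvu, hσ, hv⟩ := exists_conj_of_trace_nondegenerate σ hnd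
  have hu (i) : (u i).trace = 1 := by
    have huv' : (fun i => (u i).trace • v i) = v :=
      eq_of_piTrace_mul fun a => by rw [← trace_mulRight_comp_conj hσ, hv]
    have : ((u i).trace • v i) * u i = v i * u i := congrArg (· * u i) (congrFun huv' i)
    rw [smul_mul_assoc, show v i * u i = 1 from congrFun hvu i] at this
    exact smul_left_injective F one_ne_zero (by simpa using this)
  have hgv (i) : (v i).trace • u i = g i * v i := by
    have : (fun i => (v i).trace • u i) = g * v := eq_of_piTrace_mul fun a => by
      rw [← trace_mulLeft_comp_conj hσ, hg, hv, mul_assoc]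
    exact congrFun this i
  have : Algebra.IsAlgebraic ℚ (algebraicClosure ℚ F) := by
    convert algebraicClosure.isAlgebraic ℚ F
    · rfl
    · exact Subsingleton.elim _ _
  let τ : algebraicClosure ℚ F →ₐ[ℚ] ℂ := IsAlgClosed.lift
  choose z hz hpos using fun i =>
    exists_eq_trace_and_pos τ hN (congrFun hgN i) (congrFun hvu i) (hu i) (hgv i)
  have htr : LinearMap.trace F _ σ.toLinearMap = ((∑ i, z i : algebraicClosure ℚ F) : F) := by
    have := hv 1
    rw [LinearMap.mulRight_one, LinearMap.id_comp, one_mul, piTrace_apply] at this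
    simp [this, hz]
  rw [htr, Ne, ZeroMemClass.coe_eq_zero, ← map_eq_zero_iff τ τ.injective, map_sum]
  exact (Finset.sum_pos (fun i _ => hpos i) Finset.univ_nonempty).ne'

end PiMatrix

theorem trace_ne_zero_of_isSemisimpleRing {F A : Type*} [Field F] [CharZero F] [IsAlgClosed F]
    [Ring A] [Algebra F A] [FiniteDimensional F A] [IsSemisimpleRing A] [Nontrivial A]
    (σ : A →ₐ[F] A)
    (hnd : ∀ a, (∀ b, LinearMap.trace F _ (LinearMap.mulRight F (a * b) ∘ₗ σ.toLinearMap) = 0) →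
      a = 0)
    {g : A} {N : ℕ} (hN : N ≠ 0) (hgN : g ^ N = 1)
    (hg : ∀ a, LinearMap.trace F _ (LinearMap.mulLeft F a ∘ₗ σ.toLinearMap) =
      LinearMap.trace F _ (LinearMap.mulRight F (a * g) ∘ₗ σ.toLinearMap)) :
    LinearMap.trace F _ σ.toLinearMap ≠ 0 := by
  obtain ⟨n, d, hd, ⟨e⟩⟩ := IsSemisimpleRing.exists_algEquiv_pi_matrix_of_isAlgClosed F A
  have : Nonempty (Fin n) := by
    by_contra! hn
    exact zero_ne_one (e.injective (Subsingleton.elim (e 0) (e 1)))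
  let σ' := (e.toAlgHom.comp σ).comp e.symm.toAlgHom
  have trace_conj (f) : LinearMap.trace F _ (e.toLinearEquiv.conj f) = LinearMap.trace F A f :=
    LinearMap.trace_conj' f e.toLinearEquiv
  have hσ : σ'.toLinearMap = e.toLinearEquiv.conj σ.toLinearMap := rfl
  have hL (a) : LinearMap.mulLeft F a ∘ₗ σ'.toLinearMap =
      e.toLinearEquiv.conj (LinearMap.mulLeft F (e.symm a) ∘ₗ σ.toLinearMap) := by
    refine LinearMap.ext fun x => ?_
    simp [σ', LinearEquiv.conj_apply]
  have hR (a) : LinearMap.mulRight F a ∘ₗ σ'.toLinearMap =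
      e.toLinearEquiv.conj (LinearMap.mulRight F (e.symm a) ∘ₗ σ.toLinearMap) := by
    refine LinearMap.ext fun x => ?_
    simp [σ', LinearEquiv.conj_apply]
  have := trace_ne_zero_of_piMatrix σ' (fun a ha => ?_) (g := e g) hN
    (by rw [← map_pow, hgN, map_one])
    fun a => by rw [hL, hR, trace_conj, trace_conj, hg]; simp
  · rwa [hσ, trace_conj] at this
  · rw [← map_eq_zero_iff e.symm e.symm.injective]
    refine hnd _ fun b => ?_
    have := ha (e b)
    rwa [hR, trace_conj, map_mul, e.symm_apply_apply] at this

section Haar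

variable {F A : Type*} [Field F] [Ring A] [HopfAlgebra F A]

/-- A Haar functional: a right integral on `A` normalized by `χ(1) = 1`. -/
structure IsHaar (χ : A →ₗ[F] F) : Prop where
  isRightIntegral : IsRightIntegral χ
  map_one : χ 1 = 1

theorem trace_antipodeSq_ne_zero [CharZero F] [IsAlgClosed F] [FiniteDimensional F A]
    [IsSemisimpleRing A] : LinearMap.trace F A (antipodeSq F).toLinearMap ≠ 0 := by
  have : Nontrivial A := ⟨⟨0, 1, fun h => by simpa using congrArg (counit (R := F)) h⟩⟩
  obtain ⟨Λ, hΛ⟩ := exists_isNormalizedIntegral F A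
  obtain ⟨N, hN, hg⟩ := exists_pow_eq_one_of_isGroupLikeElem hΛ.isGroupLikeElem_hitL_sqTraceR
  exact trace_ne_zero_of_isSemisimpleRing (antipodeSq F)
    (fun _ => hΛ.eq_zero_of_sqTraceR_mul_eq_zero) hN.ne' hg hΛ.sqTraceL_eq_sqTraceR_mul

variable (F A) in
theorem exists_isHaar [CharZero F] [IsAlgClosed F] [FiniteDimensional F A] [IsSemisimpleRing A] :
    ∃ χ : A →ₗ[F] F, IsHaar χ := by
  have h0 : sqTraceR F A 1 ≠ 0 := by
    rw [sqTraceR_apply, LinearMap.mulRight_one, LinearMap.id_comp]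
    exact trace_antipodeSq_ne_zero
  refine ⟨(sqTraceR F A 1)⁻¹ • sqTraceR F A, fun x => ?_, by simp [h0]⟩
  rw [map_smul, LinearMap.smul_apply, isRightIntegral_sqTraceR, smul_smul]
  rfl

namespace IsHaar

variable {χ : A →ₗ[F] F} (hχ : IsHaar χ)

include hχ

theorem apply_antipode_mul (a h : A) :
    χ (antipode F a * h) = χ (antipode F h * antipodeSq F a) := by
  rw [← hχ.isRightIntegral.apply_antipode hχ.map_one, antipode_mul_antidistrib, antipodeSq_apply]

theorem apply_antipode_mul_hitR (f : A →ₗ[F] F) (a h : A) :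
    χ (antipode F a * hitR f h) =
      χ (antipode F (hitL (f ∘ₗ (antipodeSq F).toLinearMap) a) * h) := by
  rw [hχ.apply_antipode_mul, ← hχ.isRightIntegral.apply_antipode_mul_hitL, hitL_antipodeSq,
    ← hχ.apply_antipode_mul]

end IsHaar

end Haar

section Subcoalgebras

variable {F A : Type} [Field F] [Ring A] [HopfAlgebra F A]

theorem IsSubcoalgebra.exists_repr {C : Submodule F A} (hC : IsSubcoalgebra F A C) {c : A}
    (hc : c ∈ C) : ∃ r : Repr F c (C × C), (∀ i, r.left i ∈ C) ∧ ∀ i, r.right i ∈ C := by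
  obtain ⟨t, ht⟩ := hC c hc
  obtain ⟨s, rfl⟩ := TensorProduct.exists_finset t
  exact ⟨⟨s, fun i => i.1, fun i => i.2, by rw [← ht]; simp⟩, fun i => i.1.2, fun i => i.2.2⟩

theorem IsSubcoalgebra.hitL_mem {C : Submodule F A} (hC : IsSubcoalgebra F A C) {c : A}
    (hc : c ∈ C) (f : A →ₗ[F] F) : hitL f c ∈ C := by
  obtain ⟨r, hl, -⟩ := hC.exists_repr hc
  rw [hitL_eq_sum r]
  exact sum_mem fun i _ => C.smul_mem _ (hl i)

theorem IsSubcoalgebra.hitR_mem {C : Submodule F A} (hC : IsSubcoalgebra F A C) {c : A}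
    (hc : c ∈ C) (f : A →ₗ[F] F) : hitR f c ∈ C := by
  obtain ⟨r, -, hr⟩ := hC.exists_repr hc
  rw [hitR_eq_sum r]
  exact sum_mem fun i _ => C.smul_mem _ (hr i)

/-- The orthogonal of `X` for the form `(x, h) ↦ χ(S(x) h)`. -/
def orth (χ : A →ₗ[F] F) (X : Submodule F A) : Submodule F A :=
  LinearMap.ker (((LinearMap.mul F A).compr₂ χ ∘ₗ antipode F ∘ₗ X.subtype).flip)

theorem mem_orth {χ : A →ₗ[F] F} {X : Submodule F A} {h : A} :
    h ∈ orth χ X ↔ ∀ x ∈ X, χ (antipode F x * h) = 0 := by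
  simp [orth, LinearMap.ext_iff]

theorem IsSubcoalgebra.le_orth_of_disjoint {C X : Submodule F A} (hC : IsSubcoalgebra F A C)
    (hX : IsSubcoalgebra F A X) (h : Disjoint C X) {ψ : A →ₗ[F] F} (hψ : IsRightIntegral ψ) :
    C ≤ orth ψ X := by
  refine fun c hc => mem_orth.2 fun x hx => ?_
  let α : A →ₗ[F] F := ψ ∘ₗ LinearMap.mulLeft F (antipode F x)
  let β : A →ₗ[F] F := ψ ∘ₗ LinearMap.mulRight F c ∘ₗ antipode F
  have hαβ : hitR α c = hitL β x := eq_of_forall_dual_apply_eq (F := F) fun f =>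
    (apply_hitR f α c).trans ((hψ.apply_antipode_mul_hitL f x c).trans (apply_hitR β f x))
  have h0 : hitR α c = 0 :=
    Submodule.disjoint_def.1 h _ (hC.hitR_mem hc α) (hαβ ▸ hX.hitL_mem hx β)
  change α c = 0
  rw [← counit_hitR, h0, map_zero]

variable [FiniteDimensional F A]

theorem isSubcoalgebra_of_hit_mem {C : Submodule F A}
    (hL : ∀ c ∈ C, ∀ f : A →ₗ[F] F, hitL f c ∈ C) (hR : ∀ c ∈ C, ∀ f : A →ₗ[F] F, hitR f c ∈ C) :
    IsSubcoalgebra F A C := by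
  intro c hc
  obtain ⟨p, hp⟩ := C.subtype.exists_leftInverse_of_injective C.ker_subtype
  have hp' (x : A) (hx : x ∈ C) : (C.subtype ∘ₗ p) x = x :=
    congrArg Subtype.val (congrArg (fun f => f ⟨x, hx⟩) hp)
  let b := Module.finBasis F A
  have h1 : (C.subtype ∘ₗ p).rTensor A (comul (R := F) c) = comul c := by
    simp only [comul_eq_sum_hitL_tmul b c, map_sum, LinearMap.rTensor_tmul, hp' _ (hL c hc _)]
  have h2 : (C.subtype ∘ₗ p).lTensor A (comul (R := F) c) = comul c := by
    simp only [comul_eq_sum_tmul_hitR b c, map_sum, LinearMap.lTensor_tmul, hp' _ (hR c hc _)]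
  refine ⟨TensorProduct.map p p (comul c), ?_⟩
  rw [← LinearMap.comp_apply, ← TensorProduct.map_comp]
  conv_rhs => rw [← h1, ← h2]
  rw [← LinearMap.rTensor_comp_lTensor]
  rfl

theorem isSubcoalgebra_top : IsSubcoalgebra F A ⊤ :=
  isSubcoalgebra_of_hit_mem (by simp) (by simp)

theorem IsSubcoalgebra.inf {C D : Submodule F A} (hC : IsSubcoalgebra F A C)
    (hD : IsSubcoalgebra F A D) : IsSubcoalgebra F A (C ⊓ D) :=
  isSubcoalgebra_of_hit_mem (fun _ hc f => ⟨hC.hitL_mem hc.1 f, hD.hitL_mem hc.2 f⟩)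
    fun _ hc f => ⟨hC.hitR_mem hc.1 f, hD.hitR_mem hc.2 f⟩

theorem isSubcoalgebra_sSup {s : Set (Submodule F A)} (hs : ∀ C ∈ s, IsSubcoalgebra F A C) :
    IsSubcoalgebra F A (sSup s) := by
  refine isSubcoalgebra_of_hit_mem (fun c hc f => ?_) fun c hc f => ?_
  · have : sSup s ≤ (sSup s).comap (hitL f) :=
      sSup_le fun C hC x hx => le_sSup (a := C) hC ((hs C hC).hitL_mem hx f)
    exact this hc
  · have : sSup s ≤ (sSup s).comap (hitR f) :=
      sSup_le fun C hC x hx => le_sSup (a := C) hC ((hs C hC).hitR_mem hx f)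
    exact this hc

theorem IsSubcoalgebra.mul {C D : Submodule F A} (hC : IsSubcoalgebra F A C)
    (hD : IsSubcoalgebra F A D) : IsSubcoalgebra F A (C * D) := by
  refine isSubcoalgebra_of_hit_mem (fun c hc f => ?_) fun c hc f => ?_
  · suffices C * D ≤ (C * D).comap (hitL f) from this hc
    refine Submodule.mul_le.2 fun x hx y hy => ?_
    obtain ⟨r, hl, -⟩ := hD.exists_repr hy
    rw [Submodule.mem_comap, hitL_mul r]
    exact sum_mem fun i _ => Submodule.mul_mem_mul (hC.hitL_mem hx _) (hl i)
  · suffices C * D ≤ (C * D).comap (hitR f) from this hc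
    refine Submodule.mul_le.2 fun x hx y hy => ?_
    obtain ⟨r, -, hr⟩ := hC.exists_repr hx
    rw [Submodule.mem_comap, hitR_mul r]
    exact sum_mem fun i _ => Submodule.mul_mem_mul (hr i) (hD.hitR_mem hy _)

theorem IsSubcoalgebra.exists_isSimpleSubcoalgebra_le {X : Submodule F A}
    (hX : IsSubcoalgebra F A X) (h0 : X ≠ ⊥) : ∃ D ≤ X, IsSimpleSubcoalgebra F A D := by
  obtain ⟨D, ⟨hDX, hD, hD0⟩, hmin⟩ := wellFounded_lt.has_min
    {D : Submodule F A | D ≤ X ∧ IsSubcoalgebra F A D ∧ D ≠ ⊥} ⟨X, le_rfl, hX, h0⟩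
  exact ⟨D, hDX, hD, hD0, fun E hE hE' hE0 =>
    hE.eq_of_not_lt (hmin E ⟨hE.trans hDX, hE', hE0⟩)⟩

theorem IsSimpleSubcoalgebra.le_or_le_orth {D X : Submodule F A} (hD : IsSimpleSubcoalgebra F A D)
    (hX : IsSubcoalgebra F A X) {ψ : A →ₗ[F] F} (hψ : IsRightIntegral ψ) :
    D ≤ X ∨ D ≤ orth ψ X := by
  refine or_iff_not_imp_right.2 fun h => inf_eq_left.1 (hD.2.2 _ inf_le_left (hD.1.inf hX) ?_)
  exact fun h0 => h (hD.1.le_orth_of_disjoint hX (disjoint_iff.2 h0) hψ)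

theorem finrank_le_finrank_add_finrank_orth (χ : A →ₗ[F] F) (X : Submodule F A) :
    Module.finrank F A ≤ Module.finrank F X + Module.finrank F (orth χ X) := by
  let T := ((LinearMap.mul F A).compr₂ χ ∘ₗ antipode F ∘ₗ X.subtype).flip
  have hrange : Module.finrank F (LinearMap.range T) ≤ Module.finrank F X :=
    (Submodule.finrank_le _).trans_eq Subspace.dual_finrank_eq
  rw [← LinearMap.finrank_range_add_finrank_ker T]
  exact Nat.add_le_add_right hrange _

namespace IsHaar

variable {χ : A →ₗ[F] F} (hχ : IsHaar χ) {X : Submodule F A} (hX : IsSubcoalgebra F A X)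

include hχ hX

theorem isSubcoalgebra_orth : IsSubcoalgebra F A (orth χ X) := by
  refine isSubcoalgebra_of_hit_mem (fun h hh f => mem_orth.2 fun x hx => ?_)
    fun h hh f => mem_orth.2 fun x hx => ?_
  · rw [hχ.isRightIntegral.apply_antipode_mul_hitL]
    exact mem_orth.1 hh _ (hX.hitR_mem hx f)
  · rw [hχ.apply_antipode_mul_hitR]
    exact mem_orth.1 hh _ (hX.hitL_mem hx _)

theorem disjoint_orth : Disjoint X (orth χ X) := by
  have hN := hX.inf (hχ.isSubcoalgebra_orth hX)
  have hε (n) (hn : n ∈ X ⊓ orth χ X) : counit (R := F) n = 0 := by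
    obtain ⟨r, hl, hr⟩ := hN.exists_repr hn
    have := congrArg χ (sum_antipode_mul_eq_algebraMap_counit r)
    rwa [map_sum, Finset.sum_eq_zero fun i _ => mem_orth.1 (hr i).2 _ (hl i).1,
      Algebra.algebraMap_eq_smul_one, map_smul, hχ.map_one, smul_eq_mul, mul_one, eq_comm] at this
  refine disjoint_iff.2 ((Submodule.eq_bot_iff _).2 fun n hn => ?_)
  refine eq_of_forall_dual_apply_eq (F := F) fun f => ?_
  rw [← counit_hitR, hε _ (hN.hitR_mem hn f), map_zero]

theorem sup_orth_eq_top : X ⊔ orth χ X = ⊤ :=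
  Submodule.eq_top_of_disjoint _ _ (finrank_le_finrank_add_finrank_orth χ X) (hχ.disjoint_orth hX)

theorem sSup_isSimpleSubcoalgebra_le : sSup {D | IsSimpleSubcoalgebra F A D ∧ D ≤ X} = X := by
  set Y := sSup {D | IsSimpleSubcoalgebra F A D ∧ D ≤ X}
  have hYX : Y ≤ X := sSup_le fun D hD => hD.2
  have hY : IsSubcoalgebra F A Y := isSubcoalgebra_sSup fun D hD => hD.1.1
  have h0 : orth χ Y ⊓ X = ⊥ := by
    by_contra h
    obtain ⟨D, hD, hDs⟩ :=
      ((hχ.isSubcoalgebra_orth hY).inf hX).exists_isSimpleSubcoalgebra_le h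
    have hDY : D ≤ Y := le_sSup ⟨hDs, hD.trans inf_le_right⟩
    exact hDs.2.1 (eq_bot_iff.2 (hχ.disjoint_orth hY hDY (hD.trans inf_le_left)))
  have := sup_inf_assoc_of_le (orth χ Y) hYX
  rwa [hχ.sup_orth_eq_top hY, top_inf_eq, h0, sup_bot_eq, eq_comm] at this

omit hX in
theorem antipode_injective : Function.Injective (antipode F (A := A)) := by
  refine (injective_iff_map_eq_zero _).2 fun x hx => ?_
  refine Submodule.disjoint_def.1 (hχ.disjoint_orth isSubcoalgebra_top) x trivial ?_
  refine mem_orth.2 fun y _ => ?_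
  rw [hχ.apply_antipode_mul, hx, zero_mul, map_zero]

end IsHaar

end Subcoalgebras

section Normality

variable {F A : Type} [Field F] [Ring A] [HopfAlgebra F A]

theorem adActL_eq_sum {ι : Type*} {h : A} (r : Repr F h ι) (x : A) :
    adActL F A h x = ∑ i ∈ r.index, r.left i * x * antipode F (r.right i) := by
  simp [adActL, ← r.eq]

theorem adActR_eq_sum {ι : Type*} {h : A} (r : Repr F h ι) (x : A) :
    adActR F A h x = ∑ i ∈ r.index, antipode F (r.left i) * x * r.right i := by
  simp [adActR, ← r.eq, mul_assoc]

open WithConv in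
theorem mul_eq_sum_adActL_mul {ι : Type*} {c : A} (r : Repr F c ι) (x : A) :
    c * x = ∑ i ∈ r.index, adActL F A (r.left i) x * r.right i := by
  have had : toConv ((adActL F A).flip x) =
      toConv (LinearMap.mulRight F x) * toConv (antipode F) := by
    ext h
    rw [(ℛ F h).convMul_apply]
    exact adActL_eq_sum (ℛ F h) x
  have h := congrArg (fun f => f.ofConv c) (mul_assoc (toConv (LinearMap.mulRight F x))
    (toConv (antipode F)) (toConv LinearMap.id))
  simp only [LinearMap.antipode_mul_id, mul_one, ← had, r.convMul_apply] at h
  exact h.symm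

open WithConv in
theorem mul_eq_sum_mul_adActR {ι : Type*} {c : A} (r : Repr F c ι) (x : A) :
    x * c = ∑ i ∈ r.index, r.left i * adActR F A (r.right i) x := by
  have had : toConv ((adActR F A).flip x) =
      toConv (antipode F) * toConv (LinearMap.mulLeft F x) := by
    ext h
    rw [(ℛ F h).convMul_apply]
    exact (adActR_eq_sum (ℛ F h) x).trans (Finset.sum_congr rfl fun _ _ => mul_assoc _ _ _)
  have h := congrArg (fun f => f.ofConv c) (mul_assoc (toConv LinearMap.id)
    (toConv (antipode F)) (toConv (LinearMap.mulLeft F x)))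
  simp only [LinearMap.id_mul_antipode, one_mul, ← had, r.convMul_apply] at h
  exact h

theorem counit_adActR (h x : A) :
    counit (R := F) (adActR F A h x) = counit (R := F) h * counit (R := F) x := by
  have hh := congrArg (counit (R := F)) (sum_counit_smul (ℛ F h))
  rw [adActR_eq_sum (ℛ F h), ← hh]
  simp [Finset.sum_mul, mul_right_comm]

theorem le_mul_toSubmodule (C : Submodule F A) (K : Subalgebra F A) :
    C ≤ C * K.toSubmodule := fun c hc => by
  simpa using Submodule.mul_mem_mul hc (K.mem_toSubmodule.2 (one_mem K))

theorem mul_toSubmodule_mul_toSubmodule (C : Submodule F A) (K : Subalgebra F A) :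
    C * K.toSubmodule * K.toSubmodule = C * K.toSubmodule := by
  rw [mul_assoc, K.isIdempotentElem_toSubmodule.eq]

variable {K : Subalgebra F A}

namespace IsNormalHopfSubalgebra

variable (hK : IsNormalHopfSubalgebra F A K)

include hK

theorem toSubmodule_mul {C : Submodule F A} (hC : IsSubcoalgebra F A C) :
    K.toSubmodule * C = C * K.toSubmodule := by
  refine le_antisymm (Submodule.mul_le.2 fun x hx c hc => ?_)
    (Submodule.mul_le.2 fun c hc x hx => ?_)
  · obtain ⟨r, hl, -⟩ := hC.exists_repr hc
    rw [mul_eq_sum_mul_adActR r]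
    exact sum_mem fun i _ => Submodule.mul_mem_mul (hl i) (hK.2 _ x hx).2
  · obtain ⟨r, -, hr⟩ := hC.exists_repr hc
    rw [mul_eq_sum_adActL_mul r]
    exact sum_mem fun i _ => Submodule.mul_mem_mul (hK.2 _ x hx).1 (hr i)

theorem toSubmodule_mul_mul_toSubmodule {C : Submodule F A} (hC : IsSubcoalgebra F A C) :
    K.toSubmodule * C * K.toSubmodule = C * K.toSubmodule := by
  rw [hK.toSubmodule_mul hC, mul_toSubmodule_mul_toSubmodule]

theorem mul_mul_integral {Λ : A} (hΛ : IsIdempotentIntegral F A K Λ) {d : A} (hd : d ∈ K)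
    (c : A) : d * (c * Λ) = counit (R := F) d • (c * Λ) := by
  calc d * (c * Λ) = ∑ i ∈ (ℛ F c).index,
        (ℛ F c).left i * (adActR F A ((ℛ F c).right i) d * Λ) := by
        rw [← mul_assoc, mul_eq_sum_mul_adActR (ℛ F c), Finset.sum_mul]
        simp_rw [mul_assoc]
    _ = ∑ i ∈ (ℛ F c).index, counit (R := F) d •
        ((counit (R := F) ((ℛ F c).right i) • (ℛ F c).left i) * Λ) := by
        refine Finset.sum_congr rfl fun i _ => ?_
        rw [(hΛ.2.2 _ (hK.2 _ d hd).2).1, counit_adActR, mul_comm, mul_smul, mul_smul_comm,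
          mul_smul_comm, smul_mul_assoc]
    _ = counit (R := F) d • (c * Λ) := by
        rw [← Finset.smul_sum, ← Finset.sum_mul, ← hitL_eq_sum (ℛ F c), hitL_counit]

end IsNormalHopfSubalgebra

variable [FiniteDimensional F A] {χ : A →ₗ[F] F} (hχ : IsHaar χ)

include hχ

theorem IsHaar.toSubmodule_mul_orth_le (hK : IsHopfSubalgebra F A K) {X : Submodule F A}
    (hX : K.toSubmodule * X ≤ X) : K.toSubmodule * orth χ X ≤ orth χ X := by
  let s : K.toSubmodule →ₗ[F] K.toSubmodule := (antipode F (A := A)).restrict hK.2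
  have hs : Function.Surjective s := LinearMap.injective_iff_surjective.1 fun x y hxy =>
    Subtype.ext (hχ.antipode_injective (congrArg Subtype.val hxy))
  refine Submodule.mul_le.2 fun a ha h hh => mem_orth.2 fun x hx => ?_
  obtain ⟨b, hb⟩ := hs ⟨a, ha⟩
  have hab : antipode F (b : A) = a := congrArg Subtype.val hb
  rw [← hab, ← mul_assoc, ← antipode_mul_antidistrib]
  exact mem_orth.1 hh _ (hX (Submodule.mul_mem_mul b.2 hx))

namespace IsNormalHopfSubalgebra

variable (hK : IsNormalHopfSubalgebra F A K)

include hK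

theorem le_conjK {Λ : A} (hΛ : IsIdempotentIntegral F A K Λ) (C : Submodule F A) :
    K.toSubmodule ≤ conjK F A K Λ C := by
  rw [← hχ.sSup_isSimpleSubcoalgebra_le hK.1.1]
  exact sSup_le fun D hD => le_sSup ⟨hD.1, fun d hd _ c _ _ => hK.mul_mul_integral hΛ (hD.2 hd) c⟩

theorem orth_coset_mul_le {C : Submodule F A} (hC : IsSubcoalgebra F A C) :
    orth χ (C * K.toSubmodule) * K.toSubmodule ≤ orth χ (C * K.toSubmodule) := by
  have hCK := hC.mul hK.1.1
  rw [← hK.toSubmodule_mul (hχ.isSubcoalgebra_orth hCK)]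
  refine hχ.toSubmodule_mul_orth_le hK.1 ?_
  rw [hK.toSubmodule_mul hCK, mul_toSubmodule_mul_toSubmodule]

theorem coset_eq_or_le_orth {C D : Submodule F A} (hC : IsSimpleSubcoalgebra F A C)
    (hD : IsSimpleSubcoalgebra F A D) :
    C * K.toSubmodule = D * K.toSubmodule ∨
      D * K.toSubmodule ≤ orth χ (C * K.toSubmodule) := by
  have mul_le_of_le {E X : Submodule F A} (hX : X * K.toSubmodule ≤ X) (hE : E ≤ X) :
      E * K.toSubmodule ≤ X := (mul_le_mul_left hE _).trans hX
  rcases hD.le_or_le_orth (hC.1.mul hK.1.1) hχ.isRightIntegral with hDC | hDC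
  · rcases hC.le_or_le_orth (hD.1.mul hK.1.1) hχ.isRightIntegral with hCD | hCD
    · exact .inl (le_antisymm (mul_le_of_le (mul_toSubmodule_mul_toSubmodule D K).le hCD)
        (mul_le_of_le (mul_toSubmodule_mul_toSubmodule C K).le hDC))
    · refine absurd (eq_bot_iff.2 ?_) hD.2.1
      exact hχ.disjoint_orth (hD.1.mul hK.1.1) (le_mul_toSubmodule D K)
        (hDC.trans (mul_le_of_le (hK.orth_coset_mul_le hχ hD.1) hCD))
  · exact .inr (mul_le_of_le (hK.orth_coset_mul_le hχ hC.1) hDC)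

theorem isInternal_CKsub {ι : Type} [DecidableEq ι] {rep : ι → Submodule F A}
    (hrep : IsDoubleCosetReps F A K K rep) :
    DirectSum.IsInternal fun i => CKsub F A K (rep i) := by
  have hdc (i : ι) : K.toSubmodule * rep i * K.toSubmodule = CKsub F A K (rep i) :=
    hK.toSubmodule_mul_mul_toSubmodule (hrep.1 i).1
  refine DirectSum.isInternal_submodule_of_iSupIndep_of_iSup_eq_top (fun i => ?_) ?_
  · refine (hχ.disjoint_orth ((hrep.1 i).1.mul hK.1.1)).mono_right (iSup₂_le fun j hj => ?_)
    refine (hK.coset_eq_or_le_orth hχ (hrep.1 i) (hrep.1 j)).resolve_left fun h => ?_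
    exact hj (hrep.2.1 i j (by rw [hdc, hdc]; exact h)).symm
  · rw [eq_top_iff, ← hχ.sSup_isSimpleSubcoalgebra_le isSubcoalgebra_top]
    refine sSup_le fun D hD => ?_
    obtain ⟨i, hi⟩ := hrep.2.2 D hD.1
    exact (hi.trans (hdc i).le).trans (le_iSup (fun i => CKsub F A K (rep i)) i)

end IsNormalHopfSubalgebra

end Normality

section Internal

variable {ι R V P : Type*} [DecidableEq ι] [Semiring R] [AddCommMonoid V] [Module R V]
  [AddCommMonoid P] [Module R P] {W : ι → Submodule R V} (hW : DirectSum.IsInternal W)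

include hW in
theorem eq_of_isInternal {f g : V →ₗ[R] P} (h : ∀ i, ∀ x ∈ W i, f x = g x) : f = g := by
  rw [← LinearMap.eqLocus_eq_top, eq_top_iff, ← hW.submodule_iSup_eq_top]
  exact iSup_le h

/-- The linear map out of an internal direct sum with prescribed components. -/
def internalLift (f : ∀ i, W i →ₗ[R] P) : V →ₗ[R] P :=
  DirectSum.toModule R ι P f ∘ₗ
    (LinearEquiv.ofBijective (DirectSum.coeLinearMap W) hW).symm.toLinearMap

theorem internalLift_apply (f : ∀ i, W i →ₗ[R] P) {i : ι} (x : W i) :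
    internalLift hW f x = f i x := by
  have hx : (LinearEquiv.ofBijective (DirectSum.coeLinearMap W) hW).symm x =
      DirectSum.lof R ι (fun i => W i) i x :=
    (LinearEquiv.symm_apply_eq _).2 (DirectSum.coeLinearMap_lof W i x).symm
  simp [internalLift, hx]

end Internal

section MackeyMap

variable {F A : Type} [Field F] [Ring A] [HopfAlgebra F A] {L K : Subalgebra F A}
  {M : Type v} [AddCommGroup M] [Module F M] [Module K M]
  {N : Type*} [AddCommGroup N] [Module F N]

section Ind

/-- The universal property of `A ⊗_K M`: the linear map `h ⊗ m ↦ f h m` induced by a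
`K`-balanced bilinear map `f`. -/
def indLift (f : A →ₗ[F] M →ₗ[F] N) (hf : ∀ (h : A) (a : K) (m : M), f (h * a) m = f h (a • m)) :
    Ind F A K M →ₗ[F] N :=
  ((indRel F A K M).restrictScalars F).liftQ (TensorProduct.lift f) <| by
    intro z hz
    suffices ∀ h : A, TensorProduct.lift f (h • z) = 0 by simpa using this 1
    refine Submodule.span_induction (p := fun z _ => ∀ h : A,
      TensorProduct.lift f (h • z) = 0) ?_ ?_ ?_ ?_ hz
    · rintro _ ⟨a, m, rfl⟩ h
      simp [smul_sub, TensorProduct.smul_tmul', hf]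
    · simp
    · intro x y _ _ hx hy h
      rw [smul_add, map_add, hx, hy, add_zero]
    · intro b x _ hx h
      rw [smul_smul, hx]

theorem indLift_mk (f : A →ₗ[F] M →ₗ[F] N) (hf) (h : A) (m : M) :
    indLift (K := K) f hf (Submodule.Quotient.mk (h ⊗ₜ[F] m)) = f h m := rfl

theorem ind_mk_mul_tmul (h : A) (a : K) (m : M) :
    (Submodule.Quotient.mk ((h * a) ⊗ₜ[F] m) : Ind F A K M) =
      Submodule.Quotient.mk (h ⊗ₜ[F] (a • m)) := by
  refine (Submodule.Quotient.eq _).2 ?_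
  have := (indRel F A K M).smul_mem h (Submodule.subset_span ⟨a, m, rfl⟩)
  simpa [smul_sub, TensorProduct.smul_tmul'] using this

theorem ind_hom_ext {f g : Ind F A K M →ₗ[F] N}
    (h : ∀ x m, f (Submodule.Quotient.mk (x ⊗ₜ m)) = g (Submodule.Quotient.mk (x ⊗ₜ m))) :
    f = g := by
  have : f ∘ₗ (indRel F A K M).mkQ.restrictScalars F =
      g ∘ₗ (indRel F A K M).mkQ.restrictScalars F := TensorProduct.ext' h
  exact LinearMap.ext fun z => (Submodule.Quotient.mk_surjective _ z).elim fun t ht =>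
    ht ▸ LinearMap.congr_fun this t

end Ind

section Comp

variable (L) in
/-- The left multiplication map `L ⊗_{L ∩ ᶜK} ᶜM → A ⊗_K M`, `l ⊗ (x ⊗ m) ↦ lx ⊗ m`. -/
def compToInd (Λ : A) (C : Submodule F A) : Comp F A L K Λ C M →ₗ[F] Ind F A K M :=
  (compRel F A L K Λ C M).liftQ
    (((indRel F A K M).mkQ.restrictScalars F) ∘ₗ
      (LinearMap.mul' F A ∘ₗ
        TensorProduct.map L.toSubmodule.subtype (CKsub F A K C).subtype).rTensor M ∘ₗ
      (TensorProduct.assoc F L.toSubmodule (CKsub F A K C) M).symm.toLinearMap) <| by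
    refine Submodule.span_le.2 ?_
    rintro _ (⟨l, a, haL, -, x, m, hax, rfl⟩ | ⟨l, x, a, m, hxa, rfl⟩)
    · rw [SetLike.mem_coe, LinearMap.mem_ker, map_sub, sub_eq_zero]
      change (Submodule.Quotient.mk (((l * a : A) * x) ⊗ₜ[F] m) : Ind F A K M) =
        Submodule.Quotient.mk ((l * (a * x) : A) ⊗ₜ[F] m)
      rw [mul_assoc]
    · rw [SetLike.mem_coe, LinearMap.mem_ker, map_sub, sub_eq_zero]
      change (Submodule.Quotient.mk ((l * (x * a) : A) ⊗ₜ[F] m) : Ind F A K M) =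
        Submodule.Quotient.mk ((l * x : A) ⊗ₜ[F] (a • m))
      rw [← mul_assoc, ind_mk_mul_tmul]

theorem compToInd_mk (Λ : A) (C : Submodule F A) (l : L) (x : CKsub F A K C) (m : M) :
    compToInd L Λ C (Submodule.Quotient.mk (lcmk F A L K C M l (ckmk F A K M C x m))) =
      Submodule.Quotient.mk ((l * x : A) ⊗ₜ[F] m) := rfl

theorem comp_hom_ext {Λ : A} {C : Submodule F A} {f g : Comp F A L K Λ C M →ₗ[F] N}
    (h : ∀ l x m, f (Submodule.Quotient.mk (lcmk F A L K C M l (ckmk F A K M C x m))) =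
      g (Submodule.Quotient.mk (lcmk F A L K C M l (ckmk F A K M C x m)))) : f = g :=
  Submodule.linearMap_qext _ <| TensorProduct.ext <| LinearMap.ext fun l =>
    TensorProduct.ext <| LinearMap.ext fun x => LinearMap.ext fun m => h l x m

variable (L) in
/-- The map `CK → Hom(M, L ⊗_{L ∩ ᶜK} ᶜM)`, `x ↦ (m ↦ 1 ⊗ (x ⊗ m))`. -/
def toComp (Λ : A) (C : Submodule F A) : CKsub F A K C →ₗ[F] M →ₗ[F] Comp F A L K Λ C M :=
  TensorProduct.curry
    ((compRel F A L K Λ C M).mkQ ∘ₗ TensorProduct.mk F L (CKM F A K M C) 1)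

theorem toComp_apply (Λ : A) (C : Submodule F A) (x : CKsub F A K C) (m : M) :
    toComp L Λ C x m =
      Submodule.Quotient.mk (lcmk F A L K C M 1 (ckmk F A K M C x m)) := rfl

theorem toComp_mul (Λ : A) (C : Submodule F A) (x : CKsub F A K C) (a : K) (m : M)
    (hxa : (x : A) * a ∈ CKsub F A K C) :
    toComp L Λ C ⟨x * a, hxa⟩ m = toComp L Λ C x (a • m) :=
  (Submodule.Quotient.eq _).2 (Submodule.subset_span (.inr ⟨1, x, a, m, hxa, rfl⟩))

theorem toComp_mul_left {Λ : A} {C : Submodule F A} (hC : L.toSubmodule ≤ conjK F A K Λ C)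
    (l : L) (x : CKsub F A K C) (m : M) (hlx : (l : A) * x ∈ CKsub F A K C) :
    toComp L Λ C ⟨l * x, hlx⟩ m =
      Submodule.Quotient.mk (lcmk F A L K C M l (ckmk F A K M C x m)) := by
  have hl : (⟨((1 : L) : A) * l, mul_mem (1 : L).2 l.2⟩ : L) = l := Subtype.ext (one_mul _)
  conv_rhs => rw [← hl]
  exact ((Submodule.Quotient.eq _).2
    (Submodule.subset_span (.inl ⟨1, l, l.2, hC l.2, x, m, hlx, rfl⟩))).symm

theorem mul_mem_CKsub {C : Submodule F A} {x a : A} (hx : x ∈ CKsub F A K C) (ha : a ∈ K) :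
    x * a ∈ CKsub F A K C :=
  (mul_toSubmodule_mul_toSubmodule C K).le (Submodule.mul_mem_mul hx ha)

end Comp

variable {ι : Type} [DecidableEq ι] {rep : ι → Submodule F A}
  (hrep : DirectSum.IsInternal fun i => CKsub F A K (rep i))

variable (L M) in
/-- The bilinear map `A × M → ⨁ L ⊗_{L ∩ ᶜK} ᶜM` sending `(x, m)` with `x ∈ CK` to
`1 ⊗ (x ⊗ m)` in the component of `C`. -/
def toComps (Λ : A) : A →ₗ[F] M →ₗ[F] ⨁ i, Comp F A L K Λ (rep i) M :=
  internalLift hrep fun i => (toComp L Λ (rep i)).compr₂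
    (DirectSum.lof F ι (fun i => Comp F A L K Λ (rep i) M) i)

theorem toComps_apply (Λ : A) {i : ι} {x : A} (hx : x ∈ CKsub F A K (rep i)) (m : M) :
    toComps L M hrep Λ x m =
      DirectSum.lof F ι (fun i => Comp F A L K Λ (rep i) M) i (toComp L Λ (rep i) ⟨x, hx⟩ m) :=
  LinearMap.congr_fun (internalLift_apply hrep _ ⟨x, hx⟩) m

theorem toComps_mul (Λ : A) (h : A) (a : K) (m : M) :
    toComps L M hrep Λ (h * a) m = toComps L M hrep Λ h (a • m) := by
  suffices (toComps L M hrep Λ).flip m ∘ₗ LinearMap.mulRight F (a : A) =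
    (toComps L M hrep Λ).flip (a • m) from LinearMap.congr_fun this h
  refine eq_of_isInternal hrep fun i x hx => ?_
  have hxa := mul_mem_CKsub hx a.2
  simp only [LinearMap.comp_apply, LinearMap.flip_apply, LinearMap.mulRight_apply,
    toComps_apply hrep Λ hx, toComps_apply hrep Λ hxa, toComp_mul Λ (rep i) ⟨x, hx⟩ a m hxa]

include hrep in
theorem bijective_toModule_compToInd {Λ : A}
    (hL : ∀ i, L.toSubmodule * CKsub F A K (rep i) ≤ CKsub F A K (rep i))
    (hconj : ∀ i, L.toSubmodule ≤ conjK F A K Λ (rep i)) :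
    Function.Bijective (DirectSum.toModule F ι (Ind F A K M)
      fun i => compToInd (M := M) L Λ (rep i)) := by
  set π := DirectSum.toModule F ι (Ind F A K M) fun i => compToInd (M := M) L Λ (rep i)
  let ρ := indLift (toComps L M hrep Λ) (toComps_mul hrep Λ)
  have hρπ : ρ ∘ₗ π = LinearMap.id := by
    refine DirectSum.linearMap_ext F fun i => comp_hom_ext fun l x m => ?_
    have hlx := hL i (Submodule.mul_mem_mul l.2 x.2)
    simp only [π, ρ, LinearMap.comp_apply, DirectSum.toModule_lof, compToInd_mk, indLift_mk,
      LinearMap.id_apply, toComps_apply hrep Λ hlx, toComp_mul_left (hconj i) l x m hlx]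
  have hπρ : π ∘ₗ ρ = LinearMap.id := by
    refine ind_hom_ext fun x m => ?_
    suffices π ∘ₗ (toComps L M hrep Λ).flip m = (indRel F A K M).mkQ.restrictScalars F ∘ₗ
      (TensorProduct.mk F A M).flip m from LinearMap.congr_fun this x
    refine eq_of_isInternal hrep fun i x hx => ?_
    rw [LinearMap.comp_apply, LinearMap.flip_apply, toComps_apply hrep Λ hx,
      DirectSum.toModule_lof, toComp_apply, compToInd_mk, OneMemClass.coe_one, one_mul]
    rfl
  exact Function.bijective_iff_has_inverse.2
    ⟨ρ, LinearMap.congr_fun hρπ, LinearMap.congr_fun hπρ⟩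

end MackeyMap

section General

variable {F A : Type} [Field F] [Ring A] [HopfAlgebra F A] [FiniteDimensional F A]

theorem statement_17_general {χ : A →ₗ[F] F} (hχ : IsHaar χ) {K : Subalgebra F A}
    (hK : IsNormalHopfSubalgebra F A K) {Λ : A} (hΛ : IsIdempotentIntegral F A K Λ)
    (M : Type v) [AddCommGroup M] [Module F M] [Module K M] {ι : Type} [DecidableEq ι]
    {rep : ι → Submodule F A} (hrep : IsDoubleCosetReps F A K K rep) :
    ∃ π : (⨁ i, Comp F A K K Λ (rep i) M) →ₗ[F] Ind F A K M, Function.Bijective π ∧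
      ∀ (i : ι) (l : K) (x : CKsub F A K (rep i)) (m : M),
        π (DirectSum.of (fun i => Comp F A K K Λ (rep i) M) i
            (Submodule.Quotient.mk (lcmk F A K K (rep i) M l (ckmk F A K M (rep i) x m)))) =
          Submodule.Quotient.mk ((l * x : A) ⊗ₜ[F] m) := by
  have hmul (i : ι) : K.toSubmodule * CKsub F A K (rep i) ≤ CKsub F A K (rep i) := by
    rw [CKsub, ← mul_assoc, hK.toSubmodule_mul_mul_toSubmodule (hrep.1 i).1]
  refine ⟨_, bijective_toModule_compToInd (hK.isInternal_CKsub hχ hrep) hmul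
    fun i => hK.le_conjK hχ hΛ (rep i), fun i l x m => ?_⟩
  exact (DirectSum.toModule_lof F i _).trans (compToInd_mk Λ (rep i) l x m)

end General

/-- Proposition 67: if `K` is a normal Hopf subalgebra of the
semisimple Hopf algebra `H`, then `(K, K)` is a Mackey pair of Hopf
subalgebras of `H`. -/
theorem statement_17 (K : Subalgebra k H) (hK : IsNormalHopfSubalgebra k H K)
    (Λ : H) (hΛ : IsIdempotentIntegral k H K Λ) :
    IsMackeyPair.{v} k H K K Λ := by
  obtain ⟨χ, hχ⟩ := exists_isHaar k H
  exact fun M _ _ _ _ _ ι _ rep hrep => statement_17_general hχ hK hΛ M hrep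

end Statements

end

end MackeyPaper
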